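/- arXiv:1402.0050 — 9 statements merged into one kernel-verified Lean document; each statement's English description precedes it below -/
import Mathlib

section
/- In any LTS, if P ⟹ P' and P' ⟹ P'' and P ≃ P'', then P ≃ P'. (The computation lemma for branching bisimilarity.) -/
/-!
Given a branching bisimulation `R` with `R P P''`, the relation consisting of `R`, the identity and
all pairs `(P, Y)` with `P ⟹ Y ⟹ P''` is again a branching bisimulation. For a pair `(P, Y)`, a step
of `Y` is matched by `P ⟹ Y` followed by that very step. A step of `P` is matched from `P''` through
`R`, and `Y ⟹ P''` prefixes that match; if `P''` idles, the last silent step of `Y ⟹ P''` serves as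
the match, since its source is again an intermediate state.
-/

/-- The reflexive–transitive closure of the silent (`τ`) transitions of an LTS. -/
def SilentStar {S A : Type*} (tr : S → A → S → Prop) (τ : A) : S → S → Prop :=
  Relation.ReflTransGen (fun p q => tr p τ q)

/-- `R` is a branching bisimulation for the LTS `tr` with silent label `τ`. -/
def IsBranchingBisim {S A : Type*} (tr : S → A → S → Prop) (τ : A)
    (R : S → S → Prop) : Prop :=
  ∀ P Q, R P Q →
    (∀ ℓ P', tr P ℓ P' →
      (ℓ = τ ∧ R P' Q) ∨
      ∃ Q'' Q', SilentStar tr τ Q Q'' ∧ tr Q'' ℓ Q' ∧ R P Q'' ∧ R P' Q') ∧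
    (∀ ℓ Q', tr Q ℓ Q' →
      (ℓ = τ ∧ R P Q') ∨
      ∃ P'' P', SilentStar tr τ P P'' ∧ tr P'' ℓ P' ∧ R P'' Q ∧ R P' Q')

/-- Branching bisimilarity: the union of all branching bisimulations. -/
def BrBisim {S A : Type*} (tr : S → A → S → Prop) (τ : A) (P Q : S) : Prop :=
  ∃ R, IsBranchingBisim tr τ R ∧ R P Q

/-- The weak step `P ⟹̂ℓ P'`. -/
def WeakStep {S A : Type*} (tr : S → A → S → Prop) (τ : A) (ℓ : A) (P P' : S) : Prop :=
  (ℓ = τ ∧ SilentStar tr τ P P') ∨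
  (ℓ ≠ τ ∧ ∃ P₁ P₂, SilentStar tr τ P P₁ ∧ tr P₁ ℓ P₂ ∧ SilentStar tr τ P₂ P')

/-- `R` is a weak bisimulation for the LTS `tr` with silent label `τ`. -/
def IsWeakBisim {S A : Type*} (tr : S → A → S → Prop) (τ : A)
    (R : S → S → Prop) : Prop :=
  ∀ P Q, R P Q →
    (∀ ℓ P', tr P ℓ P' → ∃ Q', WeakStep tr τ ℓ Q Q' ∧ R P' Q') ∧
    (∀ ℓ Q', tr Q ℓ Q' → ∃ P', WeakStep tr τ ℓ P P' ∧ R P' Q')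

/-- Weak bisimilarity: the union of all weak bisimulations. -/
def WkBisim {S A : Type*} (tr : S → A → S → Prop) (τ : A) (P Q : S) : Prop :=
  ∃ R, IsWeakBisim tr τ R ∧ R P Q

/-- The computation lemma: if `P ⟹ P'`, `P' ⟹ P''` and `P ≃ P''`, then `P ≃ P'`. -/
theorem computation_lemma {S A : Type*} (tr : S → A → S → Prop) (τ : A)
    (P P' P'' : S)
    (h1 : SilentStar tr τ P P') (h2 : SilentStar tr τ P' P'')
    (h3 : BrBisim tr τ P P'') :
    BrBisim tr τ P P' := by
  obtain ⟨R, hR, hPP''⟩ := h3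
  refine ⟨fun X Y => R X Y ∨ X = Y ∨
    (X = P ∧ SilentStar tr τ P Y ∧ SilentStar tr τ Y P''), ?_, Or.inr (Or.inr ⟨rfl, h1, h2⟩)⟩
  rintro X Y (hXY | rfl | ⟨rfl, hXY, hYP⟩)
  · refine ⟨fun ℓ X' hX => ?_, fun ℓ Y' hY => ?_⟩
    · rcases (hR X Y hXY).1 ℓ X' hX with ⟨hℓ, h⟩ | ⟨Y₁, Y₂, hs, ht, ha, hb⟩
      · exact Or.inl ⟨hℓ, Or.inl h⟩
      · exact Or.inr ⟨Y₁, Y₂, hs, ht, Or.inl ha, Or.inl hb⟩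
    · rcases (hR X Y hXY).2 ℓ Y' hY with ⟨hℓ, h⟩ | ⟨X₁, X₂, hs, ht, ha, hb⟩
      · exact Or.inl ⟨hℓ, Or.inl h⟩
      · exact Or.inr ⟨X₁, X₂, hs, ht, Or.inl ha, Or.inl hb⟩
  · exact ⟨fun ℓ X' hX => Or.inr ⟨X, X', .refl, hX, Or.inr (Or.inl rfl), Or.inr (Or.inl rfl)⟩,
      fun ℓ X' hX => Or.inr ⟨X, X', .refl, hX, Or.inr (Or.inl rfl), Or.inr (Or.inl rfl)⟩⟩
  · refine ⟨fun ℓ X' hX => ?_, fun ℓ Y' hY => ?_⟩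
    · rcases (hR X P'' hPP'').1 ℓ X' hX with ⟨rfl, h⟩ | ⟨Y₁, Y₂, hs, ht, ha, hb⟩
      · -- `P''` answers by idling; `Y` answers with the last silent step of `Y ⟹ P''`, if any.
        rcases Relation.ReflTransGen.cases_tail hYP with rfl | ⟨T, hYT, hT⟩
        · exact Or.inl ⟨rfl, Or.inl h⟩
        · exact Or.inr ⟨T, P'', hYT, hT,
            Or.inr (Or.inr ⟨rfl, hXY.trans hYT, .single hT⟩), Or.inl h⟩
      · exact Or.inr ⟨Y₁, Y₂, Relation.ReflTransGen.trans hYP hs, ht, Or.inl ha, Or.inl hb⟩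
    · -- `X ⟹ Y`, so `X` can first reach `Y` itself and then perform the same step.
      exact Or.inr ⟨Y, Y', hXY, hY, Or.inr (Or.inl rfl), Or.inr (Or.inl rfl)⟩
end

section
/- In any LTS, if P ⟹ Q and Q ⟹ P (P and Q lie on a cycle of silent transitions), then P ≃ Q. In particular, for a generating process constant G with silent transitions G --τ--> GX and GX --τ--> G, every process that G may evolve into along this cycle is branching bisimilar to G. -/
/-- If `P ⟹ Q` and `Q ⟹ P` (they lie on a cycle of silent transitions) then `P ≃ Q`.
In particular every process a generating constant `G` (with `G --τ--> GX` and
`GX --τ--> G`) may evolve into along this cycle is branching bisimilar to `G`. -/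
theorem silent_cycle_branching_bisimilar {S A : Type*} (tr : S → A → S → Prop) (τ : A)
    (P Q : S) (h1 : SilentStar tr τ P Q) (h2 : SilentStar tr τ Q P) :
    BrBisim tr τ P Q := by
  -- Mutual reachability under `⟹` is a reflexive branching bisimulation: a move of `X` to `Z`
  -- with label `ℓ` is answered by `Y` first silently reaching `X` and then making the same move.
  refine ⟨fun X Y => SilentStar tr τ X Y ∧ SilentStar tr τ Y X, ?_, h1, h2⟩
  have refl_star : ∀ X, SilentStar tr τ X X := fun _ => Relation.ReflTransGen.refl
  rintro X Y ⟨hXY, hYX⟩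
  exact ⟨fun ℓ Z h => Or.inr ⟨X, Z, hYX, h, ⟨refl_star X, refl_star X⟩,
      refl_star Z, refl_star Z⟩,
    fun ℓ Z h => Or.inr ⟨Y, Z, hXY, h, ⟨refl_star Y, refl_star Y⟩,
      refl_star Z, refl_star Z⟩⟩
end

section
/- In any LTS, suppose P ≃ Q and Q = Q₀ --τ--> Q₁ --τ--> … --τ--> Q_k is a sequence of silent transitions with P ≃ Q_k. Then P ≃ Q_i for every i with 0 ≤ i ≤ k; i.e., all silent transitions in such a matching sequence are state preserving with respect to ≃. -/
/-- The one-sided transfer condition of semi-branching bisimulation: moves of the left component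
are answered by the right component. -/
def SemiSim {S A : Type*} (tr : S → A → S → Prop) (τ : A) (R : S → S → Prop) : Prop :=
  ∀ P Q, R P Q → ∀ ℓ P₁, tr P ℓ P₁ →
    (ℓ = τ ∧ ∃ Q₁, SilentStar tr τ Q Q₁ ∧ R P Q₁ ∧ R P₁ Q₁) ∨
    ∃ Q₀ Q₁, SilentStar tr τ Q Q₀ ∧ tr Q₀ ℓ Q₁ ∧ R P Q₀ ∧ R P₁ Q₁

/-- Semi-branching bisimilarity `≈`: the union of all relations satisfying the semi-branching
transfer condition in both directions. -/
def SemiBisim {S A : Type*} (tr : S → A → S → Prop) (τ : A) (P Q : S) : Prop :=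
  ∃ R : S → S → Prop, SemiSim tr τ R ∧ SemiSim tr τ (flip R) ∧ R P Q

section

variable {S A : Type*} {tr : S → A → S → Prop} {τ : A}

theorem SemiSim.star {R : S → S → Prop} (hR : SemiSim tr τ R) {P Q P' : S} (h : R P Q)
    (hP : SilentStar tr τ P P') : ∃ Q', SilentStar tr τ Q Q' ∧ R P' Q' := by
  induction hP with
  | refl => exact ⟨Q, .refl, h⟩
  | tail _ hstep ih =>
    obtain ⟨Q₁, hQ₁, h₁⟩ := ih
    rcases hR _ _ h₁ _ _ hstep with ⟨-, Q', hQ', -, h'⟩ | ⟨Q'', Q', hQ'', ht, -, h'⟩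
    · exact ⟨Q', hQ₁.trans hQ', h'⟩
    · exact ⟨Q', (hQ₁.trans hQ'').tail ht, h'⟩

theorem SemiSim.comp {R₁ R₂ : S → S → Prop} (h₁ : SemiSim tr τ R₁) (h₂ : SemiSim tr τ R₂) :
    SemiSim tr τ (Relation.Comp R₁ R₂) := by
  rintro P Q ⟨M, hPM, hMQ⟩ ℓ P' ht
  rcases h₁ _ _ hPM _ _ ht with ⟨rfl, M', hM, hPM', hP'M'⟩ | ⟨M'', M', hM, htM, hPM'', hP'M'⟩
  · obtain ⟨Q', hQ, hMQ'⟩ := h₂.star hMQ hM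
    exact .inl ⟨rfl, Q', hQ, ⟨M', hPM', hMQ'⟩, ⟨M', hP'M', hMQ'⟩⟩
  · obtain ⟨Q₁, hQ₁, hMQ₁⟩ := h₂.star hMQ hM
    rcases h₂ _ _ hMQ₁ _ _ htM with ⟨rfl, Q', hQ, ha, hb⟩ | ⟨Q'', Q', hQ, htQ, ha, hb⟩
    · exact .inl ⟨rfl, Q', hQ₁.trans hQ, ⟨M'', hPM'', ha⟩, ⟨M', hP'M', hb⟩⟩
    · exact .inr ⟨Q'', Q', hQ₁.trans hQ, htQ, ⟨M'', hPM'', ha⟩, ⟨M', hP'M', hb⟩⟩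

theorem SemiBisim.symm {P Q : S} : SemiBisim tr τ P Q → SemiBisim tr τ Q P :=
  fun ⟨R, h₁, h₂, h⟩ => ⟨flip R, h₂, h₁, h⟩

theorem SemiBisim.trans {P Q T : S} :
    SemiBisim tr τ P Q → SemiBisim tr τ Q T → SemiBisim tr τ P T := by
  rintro ⟨R₁, h₁, g₁, hPQ⟩ ⟨R₂, h₂, g₂, hQT⟩
  refine ⟨Relation.Comp R₁ R₂, h₁.comp h₂, ?_, Q, hPQ, hQT⟩
  rw [Relation.flip_comp]
  exact g₂.comp g₁

/-- Semi-branching bisimilarity itself satisfies the semi-branching transfer condition. -/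
theorem semiSim_semiBisim : SemiSim tr τ (SemiBisim tr τ) := by
  rintro P Q ⟨R, h₁, h₂, h⟩ ℓ P' ht
  rcases h₁ _ _ h _ _ ht with ⟨e, Q', hQ, ha, hb⟩ | ⟨Q'', Q', hQ, htQ, ha, hb⟩
  · exact .inl ⟨e, Q', hQ, ⟨R, h₁, h₂, ha⟩, ⟨R, h₁, h₂, hb⟩⟩
  · exact .inr ⟨Q'', Q', hQ, htQ, ⟨R, h₁, h₂, ha⟩, ⟨R, h₁, h₂, hb⟩⟩

/-- The branching transfer condition for `≈`; transitivity lets the empty move replace a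
semi-branching answer `Q ⟹ Q'`. -/
theorem SemiBisim.branching {P Q : S} (h : SemiBisim tr τ P Q) {ℓ : A} {P' : S}
    (ht : tr P ℓ P') :
    (ℓ = τ ∧ SemiBisim tr τ P' Q) ∨
    ∃ Q'' Q', SilentStar tr τ Q Q'' ∧ tr Q'' ℓ Q' ∧
      SemiBisim tr τ P Q'' ∧ SemiBisim tr τ P' Q' := by
  rcases semiSim_semiBisim _ _ h _ _ ht with ⟨e, Q', -, ha, hb⟩ | h'
  · exact .inl ⟨e, hb.trans (ha.symm.trans h)⟩
  · exact .inr h'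

theorem brBisim_iff_semiBisim {P Q : S} : BrBisim tr τ P Q ↔ SemiBisim tr τ P Q := by
  constructor
  · rintro ⟨R, hR, h⟩
    refine ⟨R, fun P Q h ℓ P' ht => ?_, fun Q P h ℓ Q' ht => ?_, h⟩
    · exact ((hR P Q h).1 ℓ P' ht).imp_left fun ⟨e, h'⟩ => ⟨e, Q, .refl, h, h'⟩
    · exact ((hR P Q h).2 ℓ Q' ht).imp_left fun ⟨e, h'⟩ => ⟨e, P, .refl, h, h'⟩
  · refine fun h => ⟨SemiBisim tr τ, fun P Q h => ⟨fun ℓ P' => h.branching, ?_⟩, h⟩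
    intro ℓ Q' ht
    rcases h.symm.branching ht with ⟨e, h'⟩ | ⟨P'', P', hP, htP, ha, hb⟩
    · exact .inl ⟨e, h'.symm⟩
    · exact .inr ⟨P'', P', hP, htP, ha.symm, hb.symm⟩

/-- Stuttering property: a state lying on a silent path between two states equivalent to `P` is
itself equivalent to `P`. -/
theorem SemiBisim.stutter {P Q₀ Q Qk : S} (h₀ : SemiBisim tr τ P Q₀)
    (hQ₀ : SilentStar tr τ Q₀ Q) (hQk : SilentStar tr τ Q Qk) (hk : SemiBisim tr τ P Qk) :
    SemiBisim tr τ P Q := by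
  refine ⟨fun X Y => SemiBisim tr τ X Y ∨ (X = P ∧ Y = Q), ?_, ?_, .inr ⟨rfl, rfl⟩⟩
  · rintro X Y (h | ⟨rfl, rfl⟩) ℓ X' ht
    · rcases semiSim_semiBisim _ _ h _ _ ht with ⟨e, Y', hY, ha, hb⟩ | ⟨Y'', Y', hY, htY, ha, hb⟩
      · exact .inl ⟨e, Y', hY, .inl ha, .inl hb⟩
      · exact .inr ⟨Y'', Y', hY, htY, .inl ha, .inl hb⟩
    · rcases semiSim_semiBisim _ _ hk _ _ ht with
        ⟨e, Y', hY, ha, hb⟩ | ⟨Y'', Y', hY, htY, ha, hb⟩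
      · exact .inl ⟨e, Y', hQk.trans hY, .inl ha, .inl hb⟩
      · exact .inr ⟨Y'', Y', hQk.trans hY, htY, .inl ha, .inl hb⟩
  · intro Y X h ℓ Y₁ ht
    -- In both cases `X` silently reaches some `Z ≈ Y`, from which the move of `Y` is answered.
    obtain ⟨Z, hXZ, hYZ⟩ : ∃ Z, SilentStar tr τ X Z ∧ SemiBisim tr τ Y Z := by
      rcases h with h | ⟨rfl, rfl⟩
      · exact ⟨X, .refl, h.symm⟩
      · exact semiSim_semiBisim.star h₀.symm hQ₀
    rcases semiSim_semiBisim _ _ hYZ _ _ ht with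
      ⟨e, X', hX, ha, hb⟩ | ⟨X'', X', hX, htX, ha, hb⟩
    · exact .inl ⟨e, X', hXZ.trans hX, .inl ha.symm, .inl hb.symm⟩
    · exact .inr ⟨X'', X', hXZ.trans hX, htX, .inl ha.symm, .inl hb.symm⟩

theorem silentStar_of_steps {k : ℕ} {Qs : ℕ → S} (hstep : ∀ i < k, tr (Qs i) τ (Qs (i + 1)))
    {i j : ℕ} (hij : i ≤ j) (hj : j ≤ k) : SilentStar tr τ (Qs i) (Qs j) := by
  induction j, hij using Nat.le_induction with
  | base => exact .refl
  | succ j _ ih => exact (ih (by omega)).tail (hstep j (by omega))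

end

/-- If `P ≃ Q₀` and `Q₀ --τ--> Q₁ --τ--> … --τ--> Q_k` with `P ≃ Q_k`,
then `P ≃ Q_i` for every `0 ≤ i ≤ k`: all the silent transitions in such a
matching sequence are state preserving with respect to `≃`. -/
theorem silent_sequence_state_preserving {S A : Type*} (tr : S → A → S → Prop) (τ : A)
    (P : S) (k : ℕ) (Qs : ℕ → S)
    (h0 : BrBisim tr τ P (Qs 0))
    (hstep : ∀ i < k, tr (Qs i) τ (Qs (i + 1)))
    (hk : BrBisim tr τ P (Qs k)) :
    ∀ i ≤ k, BrBisim tr τ P (Qs i) := by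
  intro i hi
  rw [brBisim_iff_semiBisim] at h0 hk ⊢
  exact h0.stutter (silentStar_of_steps hstep (Nat.zero_le i) hi)
    (silentStar_of_steps hstep hi le_rfl) hk
end

section
/- Consider the LTS with five states P, P', Q, Q', ε and exactly the transitions P --b--> ε, P --τ--> P', P' --a--> ε, P --a--> ε, Q --b--> ε, Q --τ--> Q', Q' --a--> ε, where a, b are distinct non-silent labels. Then P ≈ Q but ¬(P ≃ Q). -/
/-- The five states of the example LTS. -/
inductive ExSt : Type where
  | P | P' | Q | Q' | eps

/-- `P ≈ Q` but `¬ (P ≃ Q)` in the LTS with exactly the transitions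
`P --b--> ε, P --τ--> P', P' --a--> ε, P --a--> ε, Q --b--> ε, Q --τ--> Q', Q' --a--> ε`,
for distinct non-silent labels `a, b`. -/
theorem example_weak_not_branching {A : Type*} (a b τ : A)
    (ha : a ≠ τ) (hb : b ≠ τ) (hab : a ≠ b) :
    let tr : ExSt → A → ExSt → Prop := fun s ℓ s' =>
      (s = .P ∧ ℓ = b ∧ s' = .eps) ∨
      (s = .P ∧ ℓ = τ ∧ s' = .P') ∨
      (s = .P' ∧ ℓ = a ∧ s' = .eps) ∨
      (s = .P ∧ ℓ = a ∧ s' = .eps) ∨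
      (s = .Q ∧ ℓ = b ∧ s' = .eps) ∨
      (s = .Q ∧ ℓ = τ ∧ s' = .Q') ∨
      (s = .Q' ∧ ℓ = a ∧ s' = .eps)
    WkBisim tr τ ExSt.P ExSt.Q ∧ ¬ BrBisim tr τ ExSt.P ExSt.Q := by
  intro tr
  have hPP' : SilentStar tr τ .P .P' := .single (by simp [tr])
  have hQQ' : SilentStar tr τ .Q .Q' := .single (by simp [tr])
  constructor
  · refine ⟨fun s t => (s = .P ∧ t = .Q) ∨ (s = .P' ∧ t = .Q') ∨ (s = .eps ∧ t = .eps),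
      ?_, by simp⟩
    rintro s t (⟨rfl, rfl⟩ | ⟨rfl, rfl⟩ | ⟨rfl, rfl⟩)
    · constructor
      · intro ℓ s' h
        have h' : (ℓ = b ∧ s' = .eps) ∨ (ℓ = τ ∧ s' = .P') ∨ (ℓ = a ∧ s' = .eps) := by
          simpa [tr] using h
        rcases h' with ⟨rfl, rfl⟩ | ⟨rfl, rfl⟩ | ⟨rfl, rfl⟩
        · exact ⟨.eps, .inr ⟨hb, .Q, .eps, .refl, by simp [tr], .refl⟩, by simp⟩
        · exact ⟨.Q', .inl ⟨rfl, hQQ'⟩, by simp⟩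
        -- The `a`-move of `P` is answered by the silent step of `Q` followed by `a`.
        · exact ⟨.eps, .inr ⟨ha, .Q', .eps, hQQ', by simp [tr], .refl⟩, by simp⟩
      · intro ℓ t' h
        have h' : (ℓ = b ∧ t' = .eps) ∨ (ℓ = τ ∧ t' = .Q') := by simpa [tr] using h
        rcases h' with ⟨rfl, rfl⟩ | ⟨rfl, rfl⟩
        · exact ⟨.eps, .inr ⟨hb, .P, .eps, .refl, by simp [tr], .refl⟩, by simp⟩
        · exact ⟨.P', .inl ⟨rfl, hPP'⟩, by simp⟩
    · constructor
      · intro ℓ s' h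
        obtain ⟨rfl, rfl⟩ : ℓ = a ∧ s' = .eps := by simpa [tr] using h
        exact ⟨.eps, .inr ⟨ha, .Q', .eps, .refl, by simp [tr], .refl⟩, by simp⟩
      · intro ℓ t' h
        obtain ⟨rfl, rfl⟩ : ℓ = a ∧ t' = .eps := by simpa [tr] using h
        exact ⟨.eps, .inr ⟨ha, .P', .eps, .refl, by simp [tr], .refl⟩, by simp⟩
    · constructor <;> intro ℓ u h <;> simp [tr] at h
  · rintro ⟨R, hR, hPQ⟩
    have reachQ' : ∀ x, SilentStar tr τ .Q' x → x = .Q' := by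
      intro x h
      induction h with
      | refl => rfl
      | tail _ h ih =>
        subst ih
        simp [tr, ha.symm] at h
    have reachQ : ∀ x, SilentStar tr τ .Q x → x = .Q ∨ x = .Q' := by
      intro x h
      induction h with
      | refl => exact .inl rfl
      | tail _ h ih =>
        rcases ih with rfl | rfl
        · simp [tr, hb.symm] at h
          exact .inr h
        · simp [tr, ha.symm] at h
    -- Answering the `a`-move of `P` forces `Q` to take its silent step first.
    have hPQ' : R .P .Q' := by
      rcases (hR _ _ hPQ).1 a .eps (by simp [tr]) with ⟨h, _⟩ | ⟨x, y, hx, hxy, hPx, _⟩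
      · exact absurd h ha
      · rcases reachQ x hx with rfl | rfl
        · simp [tr, hab, ha] at hxy
        · exact hPx
    -- The target of that silent step has no answer to the `b`-move of `P`.
    rcases (hR _ _ hPQ').1 b .eps (by simp [tr]) with ⟨h, _⟩ | ⟨x, y, hx, hxy, _, _⟩
    · exact hb h
    · obtain rfl := reachQ' x hx
      simp [tr, hab.symm] at hxy
end

section
/- In any LTS, Defender has a winning strategy in the branching bisimulation game starting from the configuration (P,Q) if and only if P ≃ Q; formally, (P,Q) ∉ AttackerWinsBr if and only if P ≃ Q. -/
/-- The one-step operator of the branching bisimulation game: from configuration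
`(P₀,P₁)` Attacker can win in one round relative to the set `W` if there are
`i ∈ {0,1}`, a label `ℓ` and a transition `P_i --ℓ--> P_i'` such that (a) for all
`P'', P'` with `P_{1-i} ⟹ P'' --ℓ--> P'`, at least one of `(P_i, P'')`, `(P_i', P')`
is in `W`, and (b) if `ℓ = τ` then also `(P_i', P_{1-i}) ∈ W`. -/
def BrGameStep {S A : Type*} (tr : S → A → S → Prop) (τ : A)
    (W : Set (S × S)) (P₀ P₁ : S) : Prop :=
  (∃ ℓ P₀', tr P₀ ℓ P₀' ∧
      (∀ P'' P', SilentStar tr τ P₁ P'' → tr P'' ℓ P' →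
        (P₀, P'') ∈ W ∨ (P₀', P') ∈ W) ∧
      (ℓ = τ → (P₀', P₁) ∈ W)) ∨
  (∃ ℓ P₁', tr P₁ ℓ P₁' ∧
      (∀ P'' P', SilentStar tr τ P₀ P'' → tr P'' ℓ P' →
        (P₁, P'') ∈ W ∨ (P₁', P') ∈ W) ∧
      (ℓ = τ → (P₁', P₀) ∈ W))

/-- The set of configurations from which Attacker wins the branching bisimulation
game, defined inductively: the least set closed under `BrGameStep`. -/
def AttackerWinsBr {S A : Type*} (tr : S → A → S → Prop) (τ : A) : Set (S × S) :=
  ⋂₀ { W : Set (S × S) | ∀ P₀ P₁, BrGameStep tr τ W P₀ P₁ → (P₀, P₁) ∈ W }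

theorem BrGameStep.swap {S A : Type*} {tr : S → A → S → Prop} {τ : A}
    {W : Set (S × S)} {P Q : S} (h : BrGameStep tr τ W P Q) : BrGameStep tr τ W Q P :=
  Or.symm h

theorem BrGameStep.mono {S A : Type*} {tr : S → A → S → Prop} {τ : A}
    {W W' : Set (S × S)} (hW : W ⊆ W') {P Q : S} (h : BrGameStep tr τ W P Q) :
    BrGameStep tr τ W' P Q := by
  rcases h with ⟨ℓ, P', h, ha, hb⟩ | ⟨ℓ, P', h, ha, hb⟩
  · exact Or.inl ⟨ℓ, P', h, fun X Y hX hY => (ha X Y hX hY).imp (@hW _) (@hW _),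
      fun e => hW (hb e)⟩
  · exact Or.inr ⟨ℓ, P', h, fun X Y hX hY => (ha X Y hX hY).imp (@hW _) (@hW _),
      fun e => hW (hb e)⟩

theorem attackerWinsBr_of_step {S A : Type*} {tr : S → A → S → Prop} {τ : A} {P Q : S}
    (h : BrGameStep tr τ (AttackerWinsBr tr τ) P Q) : (P, Q) ∈ AttackerWinsBr tr τ :=
  fun _ hW => hW P Q (h.mono (Set.sInter_subset_of_mem hW))

theorem attackerWinsBr_swap {S A : Type*} {tr : S → A → S → Prop} {τ : A} {P Q : S}
    (h : (P, Q) ∈ AttackerWinsBr tr τ) : (Q, P) ∈ AttackerWinsBr tr τ := by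
  -- Minimality, applied to the set of configurations won by Attacker in both orders.
  have key := h {x | x ∈ AttackerWinsBr tr τ ∧ x.swap ∈ AttackerWinsBr tr τ} fun P₀ P₁ hs =>
    have hs' := hs.mono (W' := AttackerWinsBr tr τ) fun _ hx => hx.1
    ⟨attackerWinsBr_of_step hs', attackerWinsBr_of_step hs'.swap⟩
  exact key.2

/-- Attacker has no winning round at a pair of a branching bisimulation `R` when the target set
consists of pairs unrelated by `R` in both directions. -/
theorem IsBranchingBisim.not_step {S A : Type*} {tr : S → A → S → Prop} {τ : A}
    {R : S → S → Prop} (hR : IsBranchingBisim tr τ R) {P Q : S} (hPQ : R P Q) :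
    ¬ BrGameStep tr τ {x | ¬ R x.1 x.2 ∧ ¬ R x.2 x.1} P Q := by
  rintro (⟨ℓ, P', h, ha, hb⟩ | ⟨ℓ, Q', h, ha, hb⟩)
  · rcases (hR P Q hPQ).1 ℓ P' h with ⟨e, hr⟩ | ⟨X, Y, hX, hY, h₁, h₂⟩
    · exact (hb e).1 hr
    · exact (ha X Y hX hY).elim (fun w => w.1 h₁) (fun w => w.1 h₂)
  · rcases (hR P Q hPQ).2 ℓ Q' h with ⟨e, hr⟩ | ⟨X, Y, hX, hY, h₁, h₂⟩
    · exact (hb e).2 hr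
    · exact (ha X Y hX hY).elim (fun w => w.2 h₁) (fun w => w.2 h₂)

/-- The transfer condition for a move of the first component, read off from the fact that the
move does not win for Attacker. -/
theorem transfer_of_not_attackerWinsBr {S A : Type*} {tr : S → A → S → Prop} {τ : A} {P Q : S}
    (hPQ : (P, Q) ∉ AttackerWinsBr tr τ) {ℓ : A} {P' : S} (h : tr P ℓ P') :
    (ℓ = τ ∧ (P', Q) ∉ AttackerWinsBr tr τ) ∨
      ∃ Q'' Q', SilentStar tr τ Q Q'' ∧ tr Q'' ℓ Q' ∧
        (P, Q'') ∉ AttackerWinsBr tr τ ∧ (P', Q') ∉ AttackerWinsBr tr τ := by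
  by_contra hc
  rw [not_or] at hc
  refine hPQ (attackerWinsBr_of_step (Or.inl ⟨ℓ, P', h, fun X Y hX hY => ?_, fun e => ?_⟩))
  · by_contra hw
    rw [not_or] at hw
    exact hc.2 ⟨X, Y, hX, hY, hw⟩
  · by_contra hw
    exact hc.1 ⟨e, hw⟩

/-- Defender has a winning strategy in the branching bisimulation game from `(P,Q)`
iff `P ≃ Q`. -/
theorem branching_game_characterization {S A : Type*} (tr : S → A → S → Prop) (τ : A)
    (P Q : S) :
    (P, Q) ∉ AttackerWinsBr tr τ ↔ BrBisim tr τ P Q := by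
  constructor
  · intro h
    refine ⟨fun P Q => (P, Q) ∉ AttackerWinsBr tr τ, fun P Q hPQ => ⟨fun ℓ P' ht => ?_,
      fun ℓ Q' ht => ?_⟩, h⟩
    · exact transfer_of_not_attackerWinsBr hPQ ht
    · rcases transfer_of_not_attackerWinsBr (mt attackerWinsBr_swap hPQ) ht with
        ⟨e, hr⟩ | ⟨X, Y, hX, hY, h₁, h₂⟩
      · exact Or.inl ⟨e, mt attackerWinsBr_swap hr⟩
      · exact Or.inr ⟨X, Y, hX, hY, mt attackerWinsBr_swap h₁, mt attackerWinsBr_swap h₂⟩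
  · rintro ⟨R, hR, hPQ⟩ hw
    exact (hw {x | ¬ R x.1 x.2 ∧ ¬ R x.2 x.1} fun _ _ hs =>
      ⟨fun hr => hR.not_step hr hs, fun hr => hR.not_step hr hs.swap⟩).1 hPQ
end

section
/- Consider any one-counter net containing distinct control states t₁, t₃, t'', t' whose rules with left-hand control state among {t₁, t₃, t'', t'} are exactly: t₃X --c--> t''X, t''X --c--> t'X, t'X --c--> t₃, t₁X --c--> t₁, where c is a non-silent label. Then for all n, m ∈ ℕ: t₃Xⁿ ≃ t₁Xᵐ if and only if m = 3n. -/
/-- The structural semantics of a one-counter net: `(p, i+k) --ℓ--> (q, j+k)` for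
every rule `pXⁱ --ℓ--> qXʲ` and every `k ≥ 0`. -/
def OCNTrans {Q A : Type*} (rules : Q → ℕ → A → Q → ℕ → Prop) :
    Q × ℕ → A → Q × ℕ → Prop :=
  fun P ℓ P' => ∃ i j k, rules P.1 i ℓ P'.1 j ∧ P.2 = i + k ∧ P'.2 = j + k

/-- `CountsDown tr c P k`: the behaviour of `P` is a chain of exactly `k` transitions, all
labelled `c`, each being the only transition available, ending in a deadlock. -/
def CountsDown {S A : Type*} (tr : S → A → S → Prop) (c : A) : S → ℕ → Prop
  | P, 0 => ∀ ℓ P', ¬ tr P ℓ P'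
  | P, k + 1 => ∃ P', (∀ ℓ X, tr P ℓ X ↔ ℓ = c ∧ X = P') ∧ CountsDown tr c P' k

section Countdown

variable {S A : Type*} {tr : S → A → S → Prop} {τ c : A}

theorem CountsDown.label_eq {P X : S} {ℓ : A} {k : ℕ} (h : CountsDown tr c P k)
    (hX : tr P ℓ X) : ℓ = c := by
  cases k with
  | zero => exact absurd hX (h _ _)
  | succ k =>
    obtain ⟨P', hP', -⟩ := h
    exact ((hP' _ _).1 hX).1

theorem CountsDown.eq_of_silentStar (hc : c ≠ τ) {P X : S} {k : ℕ} (h : CountsDown tr c P k)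
    (hX : SilentStar tr τ P X) : X = P := by
  rcases Relation.ReflTransGen.cases_head hX with hPX | ⟨Y, hY, -⟩
  · exact hPX.symm
  · exact absurd (h.label_eq hY).symm hc

theorem isBranchingBisim_countsDown :
    IsBranchingBisim tr τ (fun P Q => ∃ k, CountsDown tr c P k ∧ CountsDown tr c Q k) := by
  rintro P Q ⟨k, hP, hQ⟩
  cases k with
  | zero => exact ⟨fun _ _ h => absurd h (hP _ _), fun _ _ h => absurd h (hQ _ _)⟩
  | succ k =>
    have hP₀ := hP
    have hQ₀ := hQ
    obtain ⟨P', hP', hPk⟩ := hP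
    obtain ⟨Q', hQ', hQk⟩ := hQ
    constructor
    · intro ℓ X hX
      obtain ⟨rfl, rfl⟩ := (hP' _ _).1 hX
      exact Or.inr ⟨Q, Q', .refl, (hQ' _ _).2 ⟨rfl, rfl⟩, ⟨_, hP₀, hQ₀⟩, ⟨_, hPk, hQk⟩⟩
    · intro ℓ X hX
      obtain ⟨rfl, rfl⟩ := (hQ' _ _).1 hX
      exact Or.inr ⟨P, P', .refl, (hP' _ _).2 ⟨rfl, rfl⟩, ⟨_, hP₀, hQ₀⟩, ⟨_, hPk, hQk⟩⟩

theorem IsBranchingBisim.countsDown_eq (hc : c ≠ τ) {R : S → S → Prop}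
    (hR : IsBranchingBisim tr τ R) {P Q : S} {a b : ℕ} (hPQ : R P Q)
    (hP : CountsDown tr c P a) (hQ : CountsDown tr c Q b) : a = b := by
  induction a generalizing P Q b with
  | zero =>
    cases b with
    | zero => rfl
    | succ b =>
      obtain ⟨Q', hQ', -⟩ := hQ
      rcases (hR P Q hPQ).2 c Q' ((hQ' _ _).2 ⟨rfl, rfl⟩) with ⟨h, -⟩ | ⟨P₁, P₂, h₁, h₂, -, -⟩
      · exact absurd h hc
      · obtain rfl := hP.eq_of_silentStar hc h₁
        exact absurd h₂ (hP _ _)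
  | succ a ih =>
    obtain ⟨P', hP', hPk⟩ := hP
    rcases (hR P Q hPQ).1 c P' ((hP' _ _).2 ⟨rfl, rfl⟩) with ⟨h, -⟩ | ⟨Q₁, Q₂, h₁, h₂, -, h₃⟩
    · exact absurd h hc
    · obtain rfl := hQ.eq_of_silentStar hc h₁
      cases b with
      | zero => exact absurd h₂ (hQ _ _)
      | succ b =>
        obtain ⟨Q', hQ', hQk⟩ := hQ
        obtain ⟨-, rfl⟩ := (hQ' _ _).1 h₂
        rw [ih h₃ hPk hQk]

theorem brBisim_iff_eq (hc : c ≠ τ) {P Q : S} {a b : ℕ}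
    (hP : CountsDown tr c P a) (hQ : CountsDown tr c Q b) : BrBisim tr τ P Q ↔ a = b := by
  constructor
  · rintro ⟨R, hR, hPQ⟩
    exact hR.countsDown_eq hc hPQ hP hQ
  · rintro rfl
    exact ⟨_, isBranchingBisim_countsDown, a, hP, hQ⟩

end Countdown

section Net

variable {Q A : Type*} {rules : Q → ℕ → A → Q → ℕ → Prop} {c : A}

/-- A control state whose only rule consumes a counter unit deadlocks on the empty counter. -/
theorem not_ocnTrans_zero {p q : Q} {j : ℕ}
    (h : ∀ i ℓ q' j', rules p i ℓ q' j' ↔ i = 1 ∧ ℓ = c ∧ q' = q ∧ j' = j) (ℓ : A) (X : Q × ℕ) :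
    ¬ OCNTrans rules (p, 0) ℓ X := by
  rintro ⟨i, j', k, hr, h₁, -⟩
  obtain ⟨rfl, -⟩ := (h _ _ _ _).1 hr
  simp only at h₁
  omega

theorem ocnTrans_succ_iff {p q : Q} {j : ℕ}
    (h : ∀ i ℓ q' j', rules p i ℓ q' j' ↔ i = 1 ∧ ℓ = c ∧ q' = q ∧ j' = j) (n : ℕ) (ℓ : A)
    (X : Q × ℕ) : OCNTrans rules (p, n + 1) ℓ X ↔ ℓ = c ∧ X = (q, j + n) := by
  obtain ⟨x, y⟩ := X
  constructor
  · rintro ⟨i, j', k, hr, h₁, h₂⟩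
    obtain ⟨rfl, rfl, hx, rfl⟩ := (h _ _ _ _).1 hr
    simp only at h₁ h₂ hx
    have hk : k = n := by omega
    subst hk
    exact ⟨rfl, Prod.ext hx h₂⟩
  · rintro ⟨rfl, hX⟩
    obtain ⟨rfl, rfl⟩ := Prod.mk.inj hX
    exact ⟨1, j, n, (h _ _ _ _).2 ⟨rfl, rfl, rfl, rfl⟩, Nat.add_comm _ _, rfl⟩

theorem countsDown_t1 {t1 : Q}
    (h : ∀ i ℓ q j, rules t1 i ℓ q j ↔ i = 1 ∧ ℓ = c ∧ q = t1 ∧ j = 0) (m : ℕ) :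
    CountsDown (OCNTrans rules) c (t1, m) m := by
  induction m with
  | zero => exact not_ocnTrans_zero h
  | succ m ih => exact ⟨_, ocnTrans_succ_iff h m, by simpa using ih⟩

theorem countsDown_t3 {t3 t'' t' : Q}
    (h₃ : ∀ i ℓ q j, rules t3 i ℓ q j ↔ i = 1 ∧ ℓ = c ∧ q = t'' ∧ j = 1)
    (h₂ : ∀ i ℓ q j, rules t'' i ℓ q j ↔ i = 1 ∧ ℓ = c ∧ q = t' ∧ j = 1)
    (h₁ : ∀ i ℓ q j, rules t' i ℓ q j ↔ i = 1 ∧ ℓ = c ∧ q = t3 ∧ j = 0) (n : ℕ) :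
    CountsDown (OCNTrans rules) c (t3, n) (3 * n) := by
  induction n with
  | zero => exact not_ocnTrans_zero h₃
  | succ n ih =>
    rw [show 3 * (n + 1) = 3 * n + 1 + 1 + 1 by ring]
    refine ⟨_, ocnTrans_succ_iff h₃ n, ?_⟩
    rw [Nat.add_comm 1 n]
    refine ⟨_, ocnTrans_succ_iff h₂ n, ?_⟩
    rw [Nat.add_comm 1 n]
    refine ⟨_, ocnTrans_succ_iff h₁ n, ?_⟩
    simpa using ih

end Net

/-- In any one-counter net containing distinct control states `t₁, t₃, t'', t'` whose
rules with left-hand control state among them are exactly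
`t₃X --c--> t''X, t''X --c--> t'X, t'X --c--> t₃, t₁X --c--> t₁` for a non-silent
label `c`, one has `t₃Xⁿ ≃ t₁Xᵐ` iff `m = 3n`. -/
theorem ocn_triple_counting {Q A : Type*} [Finite Q]
    (rules : Q → ℕ → A → Q → ℕ → Prop) (τ c : A)
    (hfin : Set.Finite {r : Q × ℕ × A × Q × ℕ |
      rules r.1 r.2.1 r.2.2.1 r.2.2.2.1 r.2.2.2.2})
    (hctr : ∀ p i ℓ q j, rules p i ℓ q j → i ≤ 1)
    (hc : c ≠ τ)
    (t1 t3 t'' t' : Q)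
    (hdist : [t1, t3, t'', t'].Pairwise (· ≠ ·))
    (hrules : ∀ p, (p = t1 ∨ p = t3 ∨ p = t'' ∨ p = t') →
      ∀ i ℓ q j, rules p i ℓ q j ↔
        (p = t3 ∧ i = 1 ∧ ℓ = c ∧ q = t'' ∧ j = 1) ∨
        (p = t'' ∧ i = 1 ∧ ℓ = c ∧ q = t' ∧ j = 1) ∨
        (p = t' ∧ i = 1 ∧ ℓ = c ∧ q = t3 ∧ j = 0) ∨
        (p = t1 ∧ i = 1 ∧ ℓ = c ∧ q = t1 ∧ j = 0)) :
    ∀ n m : ℕ, BrBisim (OCNTrans rules) τ (t3, n) (t1, m) ↔ m = 3 * n := by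
  intro n m
  simp only [List.pairwise_cons, List.mem_cons, List.not_mem_nil, or_false, forall_eq_or_imp,
    forall_eq] at hdist
  obtain ⟨⟨d₁₃, d₁₂, d₁⟩, ⟨d₃₂, d₃⟩, d₂, -⟩ := hdist
  rw [brBisim_iff_eq hc (countsDown_t3 (t3 := t3) (t'' := t'') (t' := t') ?_ ?_ ?_ n)
    (countsDown_t1 (t1 := t1) ?_ m), eq_comm]
  · intro i ℓ q j
    simp [hrules t3, d₃₂, d₃, d₁₃.symm]
  · intro i ℓ q j
    simp [hrules t'', d₃₂.symm, d₂, d₁₂.symm]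
  · intro i ℓ q j
    simp [hrules t', d₃.symm, d₂.symm, d₁.symm]
  · intro i ℓ q j
    simp [hrules t1, d₁₃, d₁₂, d₁]
end

section
/- Consider any one-counter net containing pairwise distinct control states p_i, p_i', q₁, q₁', q₂, q₂', q₃, q₃', G, G', t₁, t₃, t'', t', p_j, p_j' (and possibly further states), whose rules with left-hand control state among {p_i, p_i', q₁, q₁', q₂, q₂', q₃, q₃', G, G', t₁, t₃, t'', t'} are exactly: p_i --τ--> G', p_i' --τ--> G', p_i --a--> q₁, G' --a--> q₁', G' --τ--> G'X, G'X --τ--> G', q₁ --a--> q₂, q₁' --a--> q₂', q₁ --t--> t₃, q₁' --t--> t₁, q₂ --τ--> G, q₂' --τ--> G, G --τ--> GX, GX --τ--> G, G --a--> q₃, q₂' --a--> q₃', q₃ --a--> p_j, q₃' --a--> p_j', q₃ --t--> t₁, q₃' --t--> t₁, t₃X --c--> t''X, t''X --c--> t'X, t'X --c--> t₃, t₁X --c--> t₁ (where a, t, c are pairwise distinct non-silent labels), and whose rules with other left-hand control states (in particular p_j and p_j') are arbitrary. Let n = 2^{n₁}·3^{n₂} for some n₁, n₂ ∈ ℕ.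 Then p_jX^{3n} ≃ p_j'X^{3n} if and only if p_iXⁿ ≃ p_i'Xⁿ. -/
/-! ### Branching bisimilarity -/

section Bisim

variable {S A : Type*} {tr : S → A → S → Prop} {τ : A}

theorem isBranchingBisim_brBisim : IsBranchingBisim tr τ (BrBisim tr τ) := by
  rintro P Q ⟨R, hR, hPQ⟩
  refine ⟨fun ℓ P' h => ?_, fun ℓ Q' h => ?_⟩
  · rcases (hR P Q hPQ).1 ℓ P' h with ⟨h1, h2⟩ | ⟨Q'', Q', h1, h2, h3, h4⟩
    · exact Or.inl ⟨h1, R, hR, h2⟩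
    · exact Or.inr ⟨Q'', Q', h1, h2, ⟨R, hR, h3⟩, ⟨R, hR, h4⟩⟩
  · rcases (hR P Q hPQ).2 ℓ Q' h with ⟨h1, h2⟩ | ⟨P'', P', h1, h2, h3, h4⟩
    · exact Or.inl ⟨h1, R, hR, h2⟩
    · exact Or.inr ⟨P'', P', h1, h2, ⟨R, hR, h3⟩, ⟨R, hR, h4⟩⟩

/-- A visible move is answered by a weak visible move ending in a bisimilar state. -/
theorem BrBisim.left {P Q P' : S} {ℓ : A} (h : BrBisim tr τ P Q) (hℓ : ℓ ≠ τ) (hP : tr P ℓ P') :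
    ∃ Q'' Q', SilentStar tr τ Q Q'' ∧ tr Q'' ℓ Q' ∧ BrBisim tr τ P' Q' := by
  rcases (isBranchingBisim_brBisim P Q h).1 ℓ P' hP with ⟨h1, _⟩ | ⟨Q'', Q', h1, h2, _, h4⟩
  · exact absurd h1 hℓ
  · exact ⟨Q'', Q', h1, h2, h4⟩

theorem BrBisim.right {P Q Q' : S} {ℓ : A} (h : BrBisim tr τ P Q) (hℓ : ℓ ≠ τ) (hQ : tr Q ℓ Q') :
    ∃ P'' P', SilentStar tr τ P P'' ∧ tr P'' ℓ P' ∧ BrBisim tr τ P' Q' := by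
  rcases (isBranchingBisim_brBisim P Q h).2 ℓ Q' hQ with ⟨h1, _⟩ | ⟨P'', P', h1, h2, _, h4⟩
  · exact absurd h1 hℓ
  · exact ⟨P'', P', h1, h2, h4⟩

theorem SilentStar.eq_of_stable {P P' : S} (hP : ∀ Z, ¬ tr P τ Z) (h : SilentStar tr τ P P') :
    P' = P := by
  rcases Relation.ReflTransGen.cases_head h with h | ⟨Z, h, _⟩
  · exact h.symm
  · exact absurd h (hP Z)

/-- A state without silent moves answers a visible move by a single strong move. -/
theorem BrBisim.left_stable {P Q P' : S} {ℓ : A} (h : BrBisim tr τ P Q) (hℓ : ℓ ≠ τ)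
    (hQ : ∀ Z, ¬ tr Q τ Z) (hP : tr P ℓ P') : ∃ Q', tr Q ℓ Q' ∧ BrBisim tr τ P' Q' := by
  obtain ⟨Q'', Q', h1, h2, h3⟩ := h.left hℓ hP
  obtain rfl := h1.eq_of_stable hQ
  exact ⟨Q', h2, h3⟩

theorem BrBisim.right_stable {P Q Q' : S} {ℓ : A} (h : BrBisim tr τ P Q) (hℓ : ℓ ≠ τ)
    (hP : ∀ Z, ¬ tr P τ Z) (hQ : tr Q ℓ Q') : ∃ P', tr P ℓ P' ∧ BrBisim tr τ P' Q' := by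
  obtain ⟨P'', P', h1, h2, h3⟩ := h.right hℓ hQ
  obtain rfl := h1.eq_of_stable hP
  exact ⟨P', h2, h3⟩

end Bisim

/-! ### The gadget as a labelled transition system -/

/-- The transitions of the gadget, for an arbitrary labelled transition system: `p n` stands for the
process with control state `p` and counter value `n`.  Nothing is assumed about `pj` and `pj'`. -/
structure GadgetLTS {S A : Type*} (tr : S → A → S → Prop) (τ a t c : A)
    (pi pi' q1 q1' q2 q2' q3 q3' g g' t1 t3 t'' t' pj pj' : ℕ → S) : Prop where
  ha : a ≠ τ
  ht : t ≠ τ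
  hc : c ≠ τ
  hat : a ≠ t
  tr_pi : ∀ n ℓ Z, tr (pi n) ℓ Z ↔ (ℓ = τ ∧ Z = g' n) ∨ (ℓ = a ∧ Z = q1 n)
  tr_pi' : ∀ n ℓ Z, tr (pi' n) ℓ Z ↔ ℓ = τ ∧ Z = g' n
  tr_g' : ∀ n ℓ Z, tr (g' n) ℓ Z ↔ (ℓ = a ∧ Z = q1' n) ∨ (ℓ = τ ∧ Z = g' (n + 1)) ∨
    ∃ k, n = k + 1 ∧ ℓ = τ ∧ Z = g' k
  tr_q1 : ∀ n ℓ Z, tr (q1 n) ℓ Z ↔ (ℓ = a ∧ Z = q2 n) ∨ (ℓ = t ∧ Z = t3 n)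
  tr_q1' : ∀ n ℓ Z, tr (q1' n) ℓ Z ↔ (ℓ = a ∧ Z = q2' n) ∨ (ℓ = t ∧ Z = t1 n)
  tr_q2 : ∀ n ℓ Z, tr (q2 n) ℓ Z ↔ ℓ = τ ∧ Z = g n
  tr_q2' : ∀ n ℓ Z, tr (q2' n) ℓ Z ↔ (ℓ = τ ∧ Z = g n) ∨ (ℓ = a ∧ Z = q3' n)
  tr_g : ∀ n ℓ Z, tr (g n) ℓ Z ↔ (ℓ = a ∧ Z = q3 n) ∨ (ℓ = τ ∧ Z = g (n + 1)) ∨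
    ∃ k, n = k + 1 ∧ ℓ = τ ∧ Z = g k
  tr_q3 : ∀ n ℓ Z, tr (q3 n) ℓ Z ↔ (ℓ = a ∧ Z = pj n) ∨ (ℓ = t ∧ Z = t1 n)
  tr_q3' : ∀ n ℓ Z, tr (q3' n) ℓ Z ↔ (ℓ = a ∧ Z = pj' n) ∨ (ℓ = t ∧ Z = t1 n)
  tr_t3 : ∀ n ℓ Z, tr (t3 n) ℓ Z ↔ ∃ k, n = k + 1 ∧ ℓ = c ∧ Z = t'' (k + 1)
  tr_t'' : ∀ n ℓ Z, tr (t'' n) ℓ Z ↔ ∃ k, n = k + 1 ∧ ℓ = c ∧ Z = t' (k + 1)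
  tr_t' : ∀ n ℓ Z, tr (t' n) ℓ Z ↔ ∃ k, n = k + 1 ∧ ℓ = c ∧ Z = t3 k
  tr_t1 : ∀ n ℓ Z, tr (t1 n) ℓ Z ↔ ∃ k, n = k + 1 ∧ ℓ = c ∧ Z = t1 k

/-- The relation witnessing the gadget's bisimilarities for counter value `n`: branching
bisimilarity, the identity, and the pairs visited when both guessing states are used to set the
counter to `3 * n`, including those of the testing states `t3, t'', t'` against `t1`. -/
inductive GadgetRel {S A : Type*} (tr : S → A → S → Prop) (τ : A)
    (pi pi' q1 q1' q2 q2' q3 q3' g g' t1 t3 t'' t' : ℕ → S) (n : ℕ) : S → S → Prop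
  | bisim {P Q : S} : BrBisim tr τ P Q →
      GadgetRel tr τ pi pi' q1 q1' q2 q2' q3 q3' g g' t1 t3 t'' t' n P Q
  | refl (P : S) : GadgetRel tr τ pi pi' q1 q1' q2 q2' q3 q3' g g' t1 t3 t'' t' n P P
  | pi_pi' : GadgetRel tr τ pi pi' q1 q1' q2 q2' q3 q3' g g' t1 t3 t'' t' n (pi n) (pi' n)
  | pi_g' (m : ℕ) : GadgetRel tr τ pi pi' q1 q1' q2 q2' q3 q3' g g' t1 t3 t'' t' n (pi n) (g' m)
  | q1_q1' : GadgetRel tr τ pi pi' q1 q1' q2 q2' q3 q3' g g' t1 t3 t'' t' n (q1 n) (q1' (3 * n))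
  | q2_q2' : GadgetRel tr τ pi pi' q1 q1' q2 q2' q3 q3' g g' t1 t3 t'' t' n (q2 n) (q2' (3 * n))
  | g_q2' (m : ℕ) :
      GadgetRel tr τ pi pi' q1 q1' q2 q2' q3 q3' g g' t1 t3 t'' t' n (g m) (q2' (3 * n))
  | q3_q3' :
      GadgetRel tr τ pi pi' q1 q1' q2 q2' q3 q3' g g' t1 t3 t'' t' n (q3 (3 * n)) (q3' (3 * n))
  | t3_t1 (m : ℕ) :
      GadgetRel tr τ pi pi' q1 q1' q2 q2' q3 q3' g g' t1 t3 t'' t' n (t3 m) (t1 (3 * m))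
  | t''_t1 (m : ℕ) :
      GadgetRel tr τ pi pi' q1 q1' q2 q2' q3 q3' g g' t1 t3 t'' t' n (t'' (m + 1)) (t1 (3 * m + 2))
  | t'_t1 (m : ℕ) :
      GadgetRel tr τ pi pi' q1 q1' q2 q2' q3 q3' g g' t1 t3 t'' t' n (t' (m + 1)) (t1 (3 * m + 1))

namespace GadgetLTS

variable {S A : Type*} {tr : S → A → S → Prop} {τ a t c : A}
  {pi pi' q1 q1' q2 q2' q3 q3' g g' t1 t3 t'' t' pj pj' : ℕ → S}

/-! ### Silent moves -/

theorem star_g'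
    (H : GadgetLTS tr τ a t c pi pi' q1 q1' q2 q2' q3 q3' g g' t1 t3 t'' t' pj pj')
    (m k : ℕ) : SilentStar tr τ (g' m) (g' k) := by
  have up : ∀ k, SilentStar tr τ (g' 0) (g' k) := by
    intro k
    induction k with
    | zero => exact .refl
    | succ k ih => exact ih.tail ((H.tr_g' _ _ _).2 (Or.inr (Or.inl ⟨rfl, rfl⟩)))
  have down : ∀ m, SilentStar tr τ (g' m) (g' 0) := by
    intro m
    induction m with
    | zero => exact .refl
    | succ m ih => exact .head ((H.tr_g' _ _ _).2 (Or.inr (Or.inr ⟨m, rfl, rfl, rfl⟩))) ih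
  exact (down m).trans (up k)

theorem star_g
    (H : GadgetLTS tr τ a t c pi pi' q1 q1' q2 q2' q3 q3' g g' t1 t3 t'' t' pj pj')
    (m k : ℕ) : SilentStar tr τ (g m) (g k) := by
  have up : ∀ k, SilentStar tr τ (g 0) (g k) := by
    intro k
    induction k with
    | zero => exact .refl
    | succ k ih => exact ih.tail ((H.tr_g _ _ _).2 (Or.inr (Or.inl ⟨rfl, rfl⟩)))
  have down : ∀ m, SilentStar tr τ (g m) (g 0) := by
    intro m
    induction m with
    | zero => exact .refl
    | succ m ih => exact .head ((H.tr_g _ _ _).2 (Or.inr (Or.inr ⟨m, rfl, rfl, rfl⟩))) ih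
  exact (down m).trans (up k)

theorem star_pi
    (H : GadgetLTS tr τ a t c pi pi' q1 q1' q2 q2' q3 q3' g g' t1 t3 t'' t' pj pj')
    (n k : ℕ) : SilentStar tr τ (pi n) (g' k) :=
  .head ((H.tr_pi _ _ _).2 (Or.inl ⟨rfl, rfl⟩)) (H.star_g' n k)

theorem star_pi'
    (H : GadgetLTS tr τ a t c pi pi' q1 q1' q2 q2' q3 q3' g g' t1 t3 t'' t' pj pj')
    (n k : ℕ) : SilentStar tr τ (pi' n) (g' k) :=
  .head ((H.tr_pi' _ _ _).2 ⟨rfl, rfl⟩) (H.star_g' n k)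

theorem star_q2
    (H : GadgetLTS tr τ a t c pi pi' q1 q1' q2 q2' q3 q3' g g' t1 t3 t'' t' pj pj')
    (n k : ℕ) : SilentStar tr τ (q2 n) (g k) :=
  .head ((H.tr_q2 _ _ _).2 ⟨rfl, rfl⟩) (H.star_g n k)

theorem star_q2'
    (H : GadgetLTS tr τ a t c pi pi' q1 q1' q2 q2' q3 q3' g g' t1 t3 t'' t' pj pj')
    (n k : ℕ) : SilentStar tr τ (q2' n) (g k) :=
  .head ((H.tr_q2' _ _ _).2 (Or.inl ⟨rfl, rfl⟩)) (H.star_g n k)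

theorem of_star_pi'
    (H : GadgetLTS tr τ a t c pi pi' q1 q1' q2 q2' q3 q3' g g' t1 t3 t'' t' pj pj')
    {n : ℕ} {Z : S} (h : SilentStar tr τ (pi' n) Z) :
    Z = pi' n ∨ ∃ m, Z = g' m := by
  induction h with
  | refl => exact Or.inl rfl
  | tail _ hs ih =>
    rcases ih with rfl | ⟨m, rfl⟩
    · exact Or.inr ⟨_, ((H.tr_pi' _ _ _).1 hs).2⟩
    · rcases (H.tr_g' _ _ _).1 hs with ⟨h, _⟩ | ⟨_, h⟩ | ⟨_, _, _, h⟩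
      · exact absurd h.symm H.ha
      · exact Or.inr ⟨_, h⟩
      · exact Or.inr ⟨_, h⟩

theorem of_star_q2
    (H : GadgetLTS tr τ a t c pi pi' q1 q1' q2 q2' q3 q3' g g' t1 t3 t'' t' pj pj')
    {n : ℕ} {Z : S} (h : SilentStar tr τ (q2 n) Z) :
    Z = q2 n ∨ ∃ m, Z = g m := by
  induction h with
  | refl => exact Or.inl rfl
  | tail _ hs ih =>
    rcases ih with rfl | ⟨m, rfl⟩
    · exact Or.inr ⟨_, ((H.tr_q2 _ _ _).1 hs).2⟩
    · rcases (H.tr_g _ _ _).1 hs with ⟨h, _⟩ | ⟨_, h⟩ | ⟨_, _, _, h⟩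
      · exact absurd h.symm H.ha
      · exact Or.inr ⟨_, h⟩
      · exact Or.inr ⟨_, h⟩

theorem stable_q1'
    (H : GadgetLTS tr τ a t c pi pi' q1 q1' q2 q2' q3 q3' g g' t1 t3 t'' t' pj pj')
    (n : ℕ) (Z : S) : ¬ tr (q1' n) τ Z := by
  rw [H.tr_q1']
  rintro (⟨h, _⟩ | ⟨h, _⟩)
  · exact H.ha h.symm
  · exact H.ht h.symm

theorem stable_q3'
    (H : GadgetLTS tr τ a t c pi pi' q1 q1' q2 q2' q3 q3' g g' t1 t3 t'' t' pj pj')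
    (n : ℕ) (Z : S) : ¬ tr (q3' n) τ Z := by
  rw [H.tr_q3']
  rintro (⟨h, _⟩ | ⟨h, _⟩)
  · exact H.ha h.symm
  · exact H.ht h.symm

theorem stable_t1
    (H : GadgetLTS tr τ a t c pi pi' q1 q1' q2 q2' q3 q3' g g' t1 t3 t'' t' pj pj')
    (n : ℕ) (Z : S) : ¬ tr (t1 n) τ Z := by
  rw [H.tr_t1]
  rintro ⟨_, _, h, _⟩
  exact H.hc h.symm

theorem stable_t3
    (H : GadgetLTS tr τ a t c pi pi' q1 q1' q2 q2' q3 q3' g g' t1 t3 t'' t' pj pj')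
    (n : ℕ) (Z : S) : ¬ tr (t3 n) τ Z := by
  rw [H.tr_t3]
  rintro ⟨_, _, h, _⟩
  exact H.hc h.symm

/-! ### The testing states determine the counter -/

theorem eq_of_t1_t1
    (H : GadgetLTS tr τ a t c pi pi' q1 q1' q2 q2' q3 q3' g g' t1 t3 t'' t' pj pj')
    {m n : ℕ} (h : BrBisim tr τ (t1 m) (t1 n)) : m = n := by
  induction m generalizing n with
  | zero =>
    cases n with
    | zero => rfl
    | succ n =>
      obtain ⟨_, h1, _⟩ := h.right_stable H.hc (H.stable_t1 _) ((H.tr_t1 _ _ _).2 ⟨n, rfl, rfl, rfl⟩)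
      obtain ⟨k, hk, _⟩ := (H.tr_t1 _ _ _).1 h1
      omega
  | succ m ih =>
    obtain ⟨_, h1, h2⟩ := h.left_stable H.hc (H.stable_t1 _) ((H.tr_t1 _ _ _).2 ⟨m, rfl, rfl, rfl⟩)
    obtain ⟨k, rfl, _, rfl⟩ := (H.tr_t1 _ _ _).1 h1
    rw [ih h2]

theorem eq_of_t3_t1
    (H : GadgetLTS tr τ a t c pi pi' q1 q1' q2 q2' q3 q3' g g' t1 t3 t'' t' pj pj')
    {n m : ℕ} (h : BrBisim tr τ (t3 n) (t1 m)) : m = 3 * n := by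
  induction n generalizing m with
  | zero =>
    cases m with
    | zero => rfl
    | succ m =>
      obtain ⟨_, h1, _⟩ := h.right_stable H.hc (H.stable_t3 _) ((H.tr_t1 _ _ _).2 ⟨m, rfl, rfl, rfl⟩)
      obtain ⟨k, hk, _⟩ := (H.tr_t3 _ _ _).1 h1
      omega
  | succ n ih =>
    -- three `c`-moves `t3 (n + 1) → t'' (n + 1) → t' (n + 1) → t3 n`
    obtain ⟨_, h1, h2⟩ := h.left_stable H.hc (H.stable_t1 _) ((H.tr_t3 _ _ _).2 ⟨n, rfl, rfl, rfl⟩)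
    obtain ⟨k, rfl, _, rfl⟩ := (H.tr_t1 _ _ _).1 h1
    obtain ⟨_, h3, h4⟩ :=
      h2.left_stable H.hc (H.stable_t1 _) ((H.tr_t'' _ _ _).2 ⟨n, rfl, rfl, rfl⟩)
    obtain ⟨k, rfl, _, rfl⟩ := (H.tr_t1 _ _ _).1 h3
    obtain ⟨_, h5, h6⟩ :=
      h4.left_stable H.hc (H.stable_t1 _) ((H.tr_t' _ _ _).2 ⟨n, rfl, rfl, rfl⟩)
    obtain ⟨k, rfl, _, rfl⟩ := (H.tr_t1 _ _ _).1 h5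
    have := ih h6
    omega

/-! ### The two implications -/

theorem forced
    (H : GadgetLTS tr τ a t c pi pi' q1 q1' q2 q2' q3 q3' g g' t1 t3 t'' t' pj pj')
    {n : ℕ} (h : BrBisim tr τ (pi n) (pi' n)) :
    BrBisim tr τ (pj (3 * n)) (pj' (3 * n)) := by
  obtain ⟨Q'', Q', hs, hQ, h1⟩ := h.left H.ha ((H.tr_pi _ _ _).2 (Or.inr ⟨rfl, rfl⟩))
  obtain ⟨m, rfl⟩ : ∃ m, Q' = q1' m := by
    rcases H.of_star_pi' hs with rfl | ⟨m, rfl⟩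
    · exact absurd ((H.tr_pi' _ _ _).1 hQ).1 H.ha
    · rcases (H.tr_g' _ _ _).1 hQ with ⟨_, h⟩ | ⟨h, _⟩ | ⟨_, _, h, _⟩
      · exact ⟨m, h⟩
      · exact absurd h H.ha
      · exact absurd h H.ha
  obtain rfl : m = 3 * n := by
    obtain ⟨Z, hZ, h2⟩ := h1.left_stable H.ht (H.stable_q1' _)
      ((H.tr_q1 _ _ _).2 (Or.inr ⟨rfl, rfl⟩))
    rcases (H.tr_q1' _ _ _).1 hZ with ⟨h, _⟩ | ⟨_, rfl⟩
    · exact absurd h.symm H.hat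
    · exact H.eq_of_t3_t1 h2
  have h2 : BrBisim tr τ (q2 n) (q2' (3 * n)) := by
    obtain ⟨Z, hZ, h2⟩ := h1.left_stable H.ha (H.stable_q1' _)
      ((H.tr_q1 _ _ _).2 (Or.inl ⟨rfl, rfl⟩))
    rcases (H.tr_q1' _ _ _).1 hZ with ⟨_, rfl⟩ | ⟨h, _⟩
    · exact h2
    · exact absurd h H.hat
  obtain ⟨P'', P', hs, hP, h3⟩ := h2.right H.ha ((H.tr_q2' _ _ _).2 (Or.inr ⟨rfl, rfl⟩))
  obtain ⟨k, rfl⟩ : ∃ k, P' = q3 k := by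
    rcases H.of_star_q2 hs with rfl | ⟨m, rfl⟩
    · exact absurd ((H.tr_q2 _ _ _).1 hP).1 H.ha
    · rcases (H.tr_g _ _ _).1 hP with ⟨_, h⟩ | ⟨h, _⟩ | ⟨_, _, h, _⟩
      · exact ⟨m, h⟩
      · exact absurd h H.ha
      · exact absurd h H.ha
  obtain rfl : k = 3 * n := by
    obtain ⟨Z, hZ, h4⟩ := h3.left_stable H.ht (H.stable_q3' _)
      ((H.tr_q3 _ _ _).2 (Or.inr ⟨rfl, rfl⟩))
    rcases (H.tr_q3' _ _ _).1 hZ with ⟨h, _⟩ | ⟨_, rfl⟩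
    · exact absurd h.symm H.hat
    · exact H.eq_of_t1_t1 h4
  obtain ⟨Z, hZ, h4⟩ := h3.left_stable H.ha (H.stable_q3' _)
    ((H.tr_q3 _ _ _).2 (Or.inl ⟨rfl, rfl⟩))
  rcases (H.tr_q3' _ _ _).1 hZ with ⟨_, rfl⟩ | ⟨h, _⟩
  · exact h4
  · exact absurd h H.hat

theorem isBranchingBisim_gadgetRel
    (H : GadgetLTS tr τ a t c pi pi' q1 q1' q2 q2' q3 q3' g g' t1 t3 t'' t' pj pj')
    {n : ℕ} (h : BrBisim tr τ (pj (3 * n)) (pj' (3 * n))) :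
    IsBranchingBisim tr τ (GadgetRel tr τ pi pi' q1 q1' q2 q2' q3 q3' g g' t1 t3 t'' t' n) := by
  intro P Q hPQ
  cases hPQ with
  | bisim hB =>
    refine ⟨fun ℓ P' hP => ?_, fun ℓ Q' hQ => ?_⟩
    · rcases (isBranchingBisim_brBisim P Q hB).1 ℓ P' hP with ⟨h1, h2⟩ | ⟨Z, Z', h1, h2, h3, h4⟩
      · exact Or.inl ⟨h1, .bisim h2⟩
      · exact Or.inr ⟨Z, Z', h1, h2, .bisim h3, .bisim h4⟩
    · rcases (isBranchingBisim_brBisim P Q hB).2 ℓ Q' hQ with ⟨h1, h2⟩ | ⟨Z, Z', h1, h2, h3, h4⟩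
      · exact Or.inl ⟨h1, .bisim h2⟩
      · exact Or.inr ⟨Z, Z', h1, h2, .bisim h3, .bisim h4⟩
  | refl =>
    exact ⟨fun ℓ Z hZ => Or.inr ⟨P, Z, .refl, hZ, .refl _, .refl _⟩,
      fun ℓ Z hZ => Or.inr ⟨P, Z, .refl, hZ, .refl _, .refl _⟩⟩
  | pi_pi' =>
    refine ⟨fun ℓ Z hZ => ?_, fun ℓ Z hZ => ?_⟩
    · rcases (H.tr_pi _ _ _).1 hZ with ⟨rfl, rfl⟩ | ⟨rfl, rfl⟩
      · exact Or.inr ⟨pi' n, g' n, .refl, (H.tr_pi' _ _ _).2 ⟨rfl, rfl⟩, .pi_pi', .refl _⟩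
      · exact Or.inr ⟨g' (3 * n), q1' (3 * n), H.star_pi' _ _,
          (H.tr_g' _ _ _).2 (Or.inl ⟨rfl, rfl⟩), .pi_g' _, .q1_q1'⟩
    · obtain ⟨rfl, rfl⟩ := (H.tr_pi' _ _ _).1 hZ
      exact Or.inr ⟨pi n, g' n, .refl, (H.tr_pi _ _ _).2 (Or.inl ⟨rfl, rfl⟩), .pi_pi', .refl _⟩
  | pi_g' m =>
    refine ⟨fun ℓ Z hZ => ?_, fun ℓ Z hZ => ?_⟩
    · rcases (H.tr_pi _ _ _).1 hZ with ⟨rfl, rfl⟩ | ⟨rfl, rfl⟩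
      · -- overshooting to `g' (n + 1)` leaves a last silent step into `g' n`
        exact Or.inr ⟨g' (n + 1), g' n, H.star_g' _ _,
          (H.tr_g' _ _ _).2 (Or.inr (Or.inr ⟨n, rfl, rfl, rfl⟩)), .pi_g' _, .refl _⟩
      · exact Or.inr ⟨g' (3 * n), q1' (3 * n), H.star_g' _ _,
          (H.tr_g' _ _ _).2 (Or.inl ⟨rfl, rfl⟩), .pi_g' _, .q1_q1'⟩
    · exact Or.inr ⟨g' m, Z, H.star_pi _ _, hZ, .refl _, .refl _⟩
  | q1_q1' =>
    refine ⟨fun ℓ Z hZ => ?_, fun ℓ Z hZ => ?_⟩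
    · rcases (H.tr_q1 _ _ _).1 hZ with ⟨rfl, rfl⟩ | ⟨rfl, rfl⟩
      · exact Or.inr ⟨_, q2' (3 * n), .refl, (H.tr_q1' _ _ _).2 (Or.inl ⟨rfl, rfl⟩),
          .q1_q1', .q2_q2'⟩
      · exact Or.inr ⟨_, t1 (3 * n), .refl, (H.tr_q1' _ _ _).2 (Or.inr ⟨rfl, rfl⟩),
          .q1_q1', .t3_t1 _⟩
    · rcases (H.tr_q1' _ _ _).1 hZ with ⟨rfl, rfl⟩ | ⟨rfl, rfl⟩
      · exact Or.inr ⟨_, q2 n, .refl, (H.tr_q1 _ _ _).2 (Or.inl ⟨rfl, rfl⟩), .q1_q1', .q2_q2'⟩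
      · exact Or.inr ⟨_, t3 n, .refl, (H.tr_q1 _ _ _).2 (Or.inr ⟨rfl, rfl⟩), .q1_q1', .t3_t1 _⟩
  | q2_q2' =>
    refine ⟨fun ℓ Z hZ => ?_, fun ℓ Z hZ => ?_⟩
    · obtain ⟨rfl, rfl⟩ := (H.tr_q2 _ _ _).1 hZ
      exact Or.inl ⟨rfl, .g_q2' _⟩
    · rcases (H.tr_q2' _ _ _).1 hZ with ⟨rfl, rfl⟩ | ⟨rfl, rfl⟩
      · exact Or.inr ⟨g (3 * n + 1), g (3 * n), H.star_q2 _ _,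
          (H.tr_g _ _ _).2 (Or.inr (Or.inr ⟨_, rfl, rfl, rfl⟩)), .g_q2' _, .refl _⟩
      · exact Or.inr ⟨g (3 * n), q3 (3 * n), H.star_q2 _ _,
          (H.tr_g _ _ _).2 (Or.inl ⟨rfl, rfl⟩), .g_q2' _, .q3_q3'⟩
  | g_q2' m =>
    refine ⟨fun ℓ Z hZ => ?_, fun ℓ Z hZ => ?_⟩
    · exact Or.inr ⟨g m, Z, H.star_q2' _ _, hZ, .refl _, .refl _⟩
    · rcases (H.tr_q2' _ _ _).1 hZ with ⟨rfl, rfl⟩ | ⟨rfl, rfl⟩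
      · exact Or.inr ⟨g (3 * n + 1), g (3 * n), H.star_g _ _,
          (H.tr_g _ _ _).2 (Or.inr (Or.inr ⟨_, rfl, rfl, rfl⟩)), .g_q2' _, .refl _⟩
      · exact Or.inr ⟨g (3 * n), q3 (3 * n), H.star_g _ _,
          (H.tr_g _ _ _).2 (Or.inl ⟨rfl, rfl⟩), .g_q2' _, .q3_q3'⟩
  | q3_q3' =>
    refine ⟨fun ℓ Z hZ => ?_, fun ℓ Z hZ => ?_⟩
    · rcases (H.tr_q3 _ _ _).1 hZ with ⟨rfl, rfl⟩ | ⟨rfl, rfl⟩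
      · exact Or.inr ⟨_, pj' (3 * n), .refl, (H.tr_q3' _ _ _).2 (Or.inl ⟨rfl, rfl⟩),
          .q3_q3', .bisim h⟩
      · exact Or.inr ⟨_, t1 (3 * n), .refl, (H.tr_q3' _ _ _).2 (Or.inr ⟨rfl, rfl⟩),
          .q3_q3', .refl _⟩
    · rcases (H.tr_q3' _ _ _).1 hZ with ⟨rfl, rfl⟩ | ⟨rfl, rfl⟩
      · exact Or.inr ⟨_, pj (3 * n), .refl, (H.tr_q3 _ _ _).2 (Or.inl ⟨rfl, rfl⟩),
          .q3_q3', .bisim h⟩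
      · exact Or.inr ⟨_, t1 (3 * n), .refl, (H.tr_q3 _ _ _).2 (Or.inr ⟨rfl, rfl⟩),
          .q3_q3', .refl _⟩
  | t3_t1 m =>
    refine ⟨fun ℓ Z hZ => ?_, fun ℓ Z hZ => ?_⟩
    · obtain ⟨k, rfl, rfl, rfl⟩ := (H.tr_t3 _ _ _).1 hZ
      exact Or.inr ⟨_, t1 (3 * k + 2), .refl, (H.tr_t1 _ _ _).2 ⟨_, rfl, rfl, rfl⟩,
        .t3_t1 _, .t''_t1 _⟩
    · obtain ⟨k, hk, rfl, rfl⟩ := (H.tr_t1 _ _ _).1 hZ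
      obtain ⟨l, rfl⟩ : ∃ l, m = l + 1 := ⟨m - 1, by omega⟩
      obtain rfl : k = 3 * l + 2 := by omega
      exact Or.inr ⟨_, t'' (l + 1), .refl, (H.tr_t3 _ _ _).2 ⟨_, rfl, rfl, rfl⟩,
        .t3_t1 _, .t''_t1 _⟩
  | t''_t1 m =>
    refine ⟨fun ℓ Z hZ => ?_, fun ℓ Z hZ => ?_⟩
    · obtain ⟨k, hk, rfl, rfl⟩ := (H.tr_t'' _ _ _).1 hZ
      obtain rfl : m = k := by omega
      exact Or.inr ⟨_, t1 (3 * m + 1), .refl, (H.tr_t1 _ _ _).2 ⟨_, rfl, rfl, rfl⟩,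
        .t''_t1 _, .t'_t1 _⟩
    · obtain ⟨k, hk, rfl, rfl⟩ := (H.tr_t1 _ _ _).1 hZ
      obtain rfl : k = 3 * m + 1 := by omega
      exact Or.inr ⟨_, t' (m + 1), .refl, (H.tr_t'' _ _ _).2 ⟨_, rfl, rfl, rfl⟩,
        .t''_t1 _, .t'_t1 _⟩
  | t'_t1 m =>
    refine ⟨fun ℓ Z hZ => ?_, fun ℓ Z hZ => ?_⟩
    · obtain ⟨k, hk, rfl, rfl⟩ := (H.tr_t' _ _ _).1 hZ
      obtain rfl : m = k := by omega
      exact Or.inr ⟨_, t1 (3 * m), .refl, (H.tr_t1 _ _ _).2 ⟨_, rfl, rfl, rfl⟩,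
        .t'_t1 _, .t3_t1 _⟩
    · obtain ⟨k, hk, rfl, rfl⟩ := (H.tr_t1 _ _ _).1 hZ
      obtain rfl : k = 3 * m := by omega
      exact Or.inr ⟨_, t3 m, .refl, (H.tr_t' _ _ _).2 ⟨_, rfl, rfl, rfl⟩,
        .t'_t1 _, .t3_t1 _⟩

theorem brBisim_iff
    (H : GadgetLTS tr τ a t c pi pi' q1 q1' q2 q2' q3 q3' g g' t1 t3 t'' t' pj pj')
    (n : ℕ) :
    BrBisim tr τ (pj (3 * n)) (pj' (3 * n)) ↔ BrBisim tr τ (pi n) (pi' n) :=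
  ⟨fun h => ⟨_, H.isBranchingBisim_gadgetRel h, .pi_pi'⟩, H.forced⟩

end GadgetLTS

/-! ### The one-counter net -/

theorem ocnTrans_iff {Q A : Type*} {rules : Q → ℕ → A → Q → ℕ → Prop}
    (hctr : ∀ p i ℓ q j, rules p i ℓ q j → i ≤ 1) (p : Q) (n : ℕ) (ℓ : A) (q : Q) (m : ℕ) :
    OCNTrans rules (p, n) ℓ (q, m) ↔ (∃ j, rules p 0 ℓ q j ∧ m = j + n) ∨
      ∃ k, n = k + 1 ∧ ∃ j, rules p 1 ℓ q j ∧ m = j + k := by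
  constructor
  · rintro ⟨i, j, k, hr, hn, hm⟩
    dsimp only at hr hn hm
    have hi : i = 0 ∨ i = 1 := by
      have := hctr _ _ _ _ _ hr
      omega
    rcases hi with rfl | rfl
    · exact Or.inl ⟨j, hr, by omega⟩
    · exact Or.inr ⟨k, by omega, j, hr, hm⟩
  · rintro (⟨j, hr, hm⟩ | ⟨k, hn, j, hr, hm⟩)
    · exact ⟨0, j, n, hr, (Nat.zero_add n).symm, hm⟩
    · exact ⟨1, j, k, hr, by dsimp only; omega, hm⟩

set_option linter.unusedSimpArgs false

/-- Lemma 3 of the paper: in any one-counter net containing the gadget of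
Fig. 2 (encoding multiplication of the counter by 3) built from pairwise distinct
control states `pi, pi', q1, q1', q2, q2', q3, q3', g, g', t1, t3, t'', t', pj, pj'`
and pairwise distinct non-silent labels `a, t, c`, and whose rules with left-hand
side among the first fourteen states are exactly the listed ones (the rules for
`pj`, `pj'` and any other control states being arbitrary): for `n = 2^n₁·3^n₂`,
`p_jX^{3n} ≃ p_j'X^{3n}` iff `p_iXⁿ ≃ p_i'Xⁿ`. -/
theorem ocn_defender_forcing_gadget {Q A : Type*} [Finite Q]
    (rules : Q → ℕ → A → Q → ℕ → Prop) (τ a t c : A)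
    (hfin : Set.Finite {r : Q × ℕ × A × Q × ℕ |
      rules r.1 r.2.1 r.2.2.1 r.2.2.2.1 r.2.2.2.2})
    (hctr : ∀ p i ℓ q j, rules p i ℓ q j → i ≤ 1)
    (ha : a ≠ τ) (ht : t ≠ τ) (hc : c ≠ τ)
    (hat : a ≠ t) (hac : a ≠ c) (htc : t ≠ c)
    (pi pi' q1 q1' q2 q2' q3 q3' g g' t1 t3 t'' t' pj pj' : Q)
    (hdist : [pi, pi', q1, q1', q2, q2', q3, q3', g, g', t1, t3, t'', t', pj,
      pj'].Pairwise (· ≠ ·))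
    (hrules : ∀ p,
      p ∈ [pi, pi', q1, q1', q2, q2', q3, q3', g, g', t1, t3, t'', t'] →
      ∀ i ℓ q j, rules p i ℓ q j ↔
        (p = pi ∧ i = 0 ∧ ℓ = τ ∧ q = g' ∧ j = 0) ∨
        (p = pi' ∧ i = 0 ∧ ℓ = τ ∧ q = g' ∧ j = 0) ∨
        (p = pi ∧ i = 0 ∧ ℓ = a ∧ q = q1 ∧ j = 0) ∨
        (p = g' ∧ i = 0 ∧ ℓ = a ∧ q = q1' ∧ j = 0) ∨
        (p = g' ∧ i = 0 ∧ ℓ = τ ∧ q = g' ∧ j = 1) ∨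
        (p = g' ∧ i = 1 ∧ ℓ = τ ∧ q = g' ∧ j = 0) ∨
        (p = q1 ∧ i = 0 ∧ ℓ = a ∧ q = q2 ∧ j = 0) ∨
        (p = q1' ∧ i = 0 ∧ ℓ = a ∧ q = q2' ∧ j = 0) ∨
        (p = q1 ∧ i = 0 ∧ ℓ = t ∧ q = t3 ∧ j = 0) ∨
        (p = q1' ∧ i = 0 ∧ ℓ = t ∧ q = t1 ∧ j = 0) ∨
        (p = q2 ∧ i = 0 ∧ ℓ = τ ∧ q = g ∧ j = 0) ∨
        (p = q2' ∧ i = 0 ∧ ℓ = τ ∧ q = g ∧ j = 0) ∨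
        (p = g ∧ i = 0 ∧ ℓ = τ ∧ q = g ∧ j = 1) ∨
        (p = g ∧ i = 1 ∧ ℓ = τ ∧ q = g ∧ j = 0) ∨
        (p = g ∧ i = 0 ∧ ℓ = a ∧ q = q3 ∧ j = 0) ∨
        (p = q2' ∧ i = 0 ∧ ℓ = a ∧ q = q3' ∧ j = 0) ∨
        (p = q3 ∧ i = 0 ∧ ℓ = a ∧ q = pj ∧ j = 0) ∨
        (p = q3' ∧ i = 0 ∧ ℓ = a ∧ q = pj' ∧ j = 0) ∨
        (p = q3 ∧ i = 0 ∧ ℓ = t ∧ q = t1 ∧ j = 0) ∨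
        (p = q3' ∧ i = 0 ∧ ℓ = t ∧ q = t1 ∧ j = 0) ∨
        (p = t3 ∧ i = 1 ∧ ℓ = c ∧ q = t'' ∧ j = 1) ∨
        (p = t'' ∧ i = 1 ∧ ℓ = c ∧ q = t' ∧ j = 1) ∨
        (p = t' ∧ i = 1 ∧ ℓ = c ∧ q = t3 ∧ j = 0) ∨
        (p = t1 ∧ i = 1 ∧ ℓ = c ∧ q = t1 ∧ j = 0)) :
    ∀ n₁ n₂ : ℕ,
      (BrBisim (OCNTrans rules) τ (pj, 3 * (2 ^ n₁ * 3 ^ n₂)) (pj', 3 * (2 ^ n₁ * 3 ^ n₂)) ↔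
        BrBisim (OCNTrans rules) τ (pi, 2 ^ n₁ * 3 ^ n₂) (pi', 2 ^ n₁ * 3 ^ n₂)) := by
  have hd := hdist
  -- the reversed list provides the disequalities in the opposite orientation
  have hd' : [pi, pi', q1, q1', q2, q2', q3, q3', g, g', t1, t3, t'', t', pj,
      pj'].reverse.Pairwise (· ≠ ·) := by
    rw [List.pairwise_reverse]
    exact hdist.imp Ne.symm
  simp only [List.reverse_cons, List.reverse_nil, List.nil_append, List.cons_append,
    List.pairwise_cons, List.mem_cons, List.not_mem_nil, or_false, forall_eq_or_imp, forall_eq,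
    ne_eq] at hd hd'
  have H : GadgetLTS (OCNTrans rules) τ a t c (fun n => (pi, n)) (fun n => (pi', n))
      (fun n => (q1, n)) (fun n => (q1', n)) (fun n => (q2, n)) (fun n => (q2', n))
      (fun n => (q3, n)) (fun n => (q3', n)) (fun n => (g, n)) (fun n => (g', n))
      (fun n => (t1, n)) (fun n => (t3, n)) (fun n => (t'', n)) (fun n => (t', n))
      (fun n => (pj, n)) (fun n => (pj', n)) := by
    refine ⟨ha, ht, hc, hat, ?_, ?_, ?_, ?_, ?_, ?_, ?_, ?_, ?_, ?_, ?_, ?_, ?_, ?_⟩ <;>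
      rintro n ℓ ⟨q, m⟩ <;> rw [ocnTrans_iff hctr]
    · simp only [hrules pi (by simp)]
      simp [hd, hd', and_assoc, or_assoc, or_and_right, exists_or, Nat.add_comm 1]
    · simp only [hrules pi' (by simp)]
      simp [hd, hd', and_assoc, or_assoc, or_and_right, exists_or, Nat.add_comm 1]
    · simp only [hrules g' (by simp)]
      simp [hd, hd', and_assoc, or_assoc, or_and_right, exists_or, Nat.add_comm 1]
    · simp only [hrules q1 (by simp)]
      simp [hd, hd', and_assoc, or_assoc, or_and_right, exists_or, Nat.add_comm 1]
    · simp only [hrules q1' (by simp)]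
      simp [hd, hd', and_assoc, or_assoc, or_and_right, exists_or, Nat.add_comm 1]
    · simp only [hrules q2 (by simp)]
      simp [hd, hd', and_assoc, or_assoc, or_and_right, exists_or, Nat.add_comm 1]
    · simp only [hrules q2' (by simp)]
      simp [hd, hd', and_assoc, or_assoc, or_and_right, exists_or, Nat.add_comm 1]
    · simp only [hrules g (by simp)]
      simp [hd, hd', and_assoc, or_assoc, or_and_right, exists_or, Nat.add_comm 1]
      exact or_left_comm
    · simp only [hrules q3 (by simp)]
      simp [hd, hd', and_assoc, or_assoc, or_and_right, exists_or, Nat.add_comm 1]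
    · simp only [hrules q3' (by simp)]
      simp [hd, hd', and_assoc, or_assoc, or_and_right, exists_or, Nat.add_comm 1]
    · simp only [hrules t3 (by simp)]
      simp [hd, hd', and_assoc, or_assoc, or_and_right, exists_or, Nat.add_comm 1]
    · simp only [hrules t'' (by simp)]
      simp [hd, hd', and_assoc, or_assoc, or_and_right, exists_or, Nat.add_comm 1]
    · simp only [hrules t' (by simp)]
      simp [hd, hd', and_assoc, or_assoc, or_and_right, exists_or, Nat.add_comm 1]
    · simp only [hrules t1 (by simp)]
      simp [hd, hd', and_assoc, or_assoc, or_and_right, exists_or, Nat.add_comm 1]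
  exact fun n₁ n₂ => H.brBisim_iff _
end

section
/- In the process algebra 𝒢 built from a PCP instance INST: for each P ∈ {D, C, C'} and every process Q, if P ⟹ P‖Q then P‖Q ⟹ P. -/
/-- The process constants of the process algebra `𝒢` built from a PCP instance
with `n` pairs of words over the alphabet `α`.  `W ω (some i)` stands for
`W(ω,i)` and `W ω none` for `W(ω,0)`. -/
inductive Cst (n : ℕ) (α : Type) : Type where
  | X | Y | Z | I | S | C | C' | D | G | G' | Gu | Gv | Gv'
  | U : Fin n → Cst n α
  | V : Fin n → Cst n α
  | W : List α → Option (Fin n) → Cst n α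

/-- The labels of `𝒢`: `λ_U, λ_V, λ_D, λ_I, λ_S, λ_Z`, the indices `1,…,n`,
the letters of `α`, and the silent label `τ`. -/
inductive Lab (n : ℕ) (α : Type) : Type where
  | lU | lV | lD | lI | lS | lZ | tau
  | idx : Fin n → Lab n α
  | ltr : α → Lab n α

/-- Processes: `ε`, constants, sequential and parallel composition. -/
inductive Proc (n : ℕ) (α : Type) : Type where
  | nil
  | cst : Cst n α → Proc n α
  | seq : Proc n α → Proc n α → Proc n α
  | par : Proc n α → Proc n α → Proc n α

/-- Shorthand for a constant viewed as a process. -/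
def K {n : ℕ} {α : Type} (c : Cst n α) : Proc n α := Proc.cst c

/-- The raw transition rules of `𝒢` (from Fig. 3 of the paper), closed under
the structural rules for sequential (left) and parallel composition. -/
inductive Step {n : ℕ} {α : Type} (u v : Fin n → List α) :
    Proc n α → Lab n α → Proc n α → Prop where
  | xU : Step u v (K .X) .lU (.par (K .D) (K .Gv))
  | xT : Step u v (K .X) .tau (K .D)
  | yT : Step u v (K .Y) .tau (K .D)
  | dT : Step u v (K .D) .tau (.par (K .D) (K .Gu))
  | dD : Step u v (K .D) .lD (K .C)
  | guT (i : Fin n) : Step u v (K .Gu) .tau (.seq (K .Gu) (K (.U i)))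
  | guU (i : Fin n) : Step u v (K .Gu) .lU (.seq (K .Gv) (K (.U i)))
  | guGv' : Step u v (K .Gu) .tau (K .Gv')
  | gv'T (i : Fin n) : Step u v (K .Gv') .tau (.seq (K .Gv') (K (.V i)))
  | gv'Z : Step u v (K .Gv') .tau (K .Z)
  | gvT (i : Fin n) : Step u v (K .Gv) .tau (.seq (K .Gv) (K (.V i)))
  | gvE : Step u v (K .Gv) .tau .nil
  | gvV : Step u v (K .Gv) .lV (K .Z)
  | zE : Step u v (K .Z) .tau .nil
  | zZ : Step u v (K .Z) .lZ .nil
  | cI : Step u v (K .C) .lI (K .I)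
  | cS : Step u v (K .C) .lS (K .S)
  | cG : Step u v (K .C) .tau (.par (K .C) (K .G))
  | cGv : Step u v (K .C) .tau (.par (K .C) (K .Gv))
  | gU (i : Fin n) : Step u v (K .G) .tau (.seq (K .G) (K (.U i)))
  | gV (i : Fin n) : Step u v (K .G) .tau (.seq (K .G) (K (.V i)))
  | gE : Step u v (K .G) .tau .nil
  | iC : Step u v (K .I) .lI (K .C')
  | iI (i : Fin n) : Step u v (K .I) (.idx i) (K .I)
  | sC : Step u v (K .S) .lS (K .C')
  | sS (a : α) : Step u v (K .S) (.ltr a) (K .S)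
  | c'G : Step u v (K .C') .tau (.par (K .C') (K .G'))
  | c'E : Step u v (K .C') .tau .nil
  | g'U (i : Fin n) : Step u v (K .G') .tau (.seq (K .G') (K (.U i)))
  | g'V (i : Fin n) : Step u v (K .G') .tau (.seq (K .G') (K (.V i)))
  | g'W (ω : List α) (k : Option (Fin n)) :
      Step u v (K .G') .tau (.seq (K .G') (K (.W ω k)))
  | g'Gv : Step u v (K .G') .tau (K .Gv)
  | g'Z : Step u v (K .G') .tau (K .Z)
  | uW (i : Fin n) : Step u v (K (.U i)) .tau (K (.W (u i) (some i)))
  | vW (i : Fin n) : Step u v (K (.V i)) .tau (K (.W (v i) (some i)))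
  | wA (a : α) (ω : List α) (k : Option (Fin n)) :
      Step u v (K (.W (a :: ω) k)) (.ltr a) (K (.W ω k))
  | wI (ω : List α) (i : Fin n) :
      Step u v (K (.W ω (some i))) (.idx i) (K (.W ω none))
  | wTa (a : α) (ω : List α) (k : Option (Fin n)) :
      Step u v (K (.W (a :: ω) k)) .tau (K (.W ω k))
  | wTi (ω : List α) (i : Fin n) :
      Step u v (K (.W ω (some i))) .tau (K (.W ω none))
  | wE : Step u v (K (.W [] none)) .tau .nil
  | seqL {P ℓ P'} (Q) : Step u v P ℓ P' → Step u v (.seq P Q) ℓ (.seq P' Q)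
  | parL {P ℓ P'} (Q) : Step u v P ℓ P' → Step u v (.par P Q) ℓ (.par P' Q)
  | parR {Q ℓ Q'} (P) : Step u v Q ℓ Q' → Step u v (.par P Q) ℓ (.par P Q')

/-- Structural congruence: sequential composition is associative, parallel
composition is associative and commutative, and `ε` is a unit for both. -/
inductive SC {n : ℕ} {α : Type} : Proc n α → Proc n α → Prop where
  | refl (P) : SC P P
  | symm {P Q} : SC P Q → SC Q P
  | trans {P Q R} : SC P Q → SC Q R → SC P R
  | seqCong {P P' Q Q'} : SC P P' → SC Q Q' → SC (.seq P Q) (.seq P' Q')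
  | parCong {P P' Q Q'} : SC P P' → SC Q Q' → SC (.par P Q) (.par P' Q')
  | seqAssoc (P Q R) : SC (.seq (.seq P Q) R) (.seq P (.seq Q R))
  | parAssoc (P Q R) : SC (.par (.par P Q) R) (.par P (.par Q R))
  | parComm (P Q) : SC (.par P Q) (.par Q P)
  | seqNilL (P) : SC (.seq .nil P) P
  | seqNilR (P) : SC (.seq P .nil) P
  | parNil (P) : SC (.par .nil P) P

/-- The transition relation of `𝒢`: the raw steps taken up to structural
congruence of processes. -/
def GTrans {n : ℕ} {α : Type} (u v : Fin n → List α) :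
    Proc n α → Lab n α → Proc n α → Prop :=
  fun P ℓ Q => ∃ P' Q', SC P P' ∧ Step u v P' ℓ Q' ∧ SC Q' Q

/-- Sequential composition of a list of constants (`ε` for the empty list). -/
def seqComp {n : ℕ} {α : Type} (l : List (Cst n α)) : Proc n α :=
  l.foldr (fun c P => .seq (.cst c) P) .nil

/-- `c` is one of the constants `U₁,…,Uₙ,V₁,…,Vₙ`. -/
def IsUV {n : ℕ} {α : Type} (c : Cst n α) : Prop :=
  (∃ i, c = Cst.U i) ∨ (∃ i, c = Cst.V i)

/-- `c` is a `W`-constant of `𝒢`, i.e. `W(ω,i)` or `W(ω,0)` with `ω` a suffix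
of some `uᵢ` or `vᵢ`. -/
def IsW {n : ℕ} {α : Type} (u v : Fin n → List α) (c : Cst n α) : Prop :=
  ∃ ω k, c = Cst.W ω k ∧ ∃ i, (ω <:+ u i ∨ ω <:+ v i)

/-- `c` is a `U`-, `V`- or `W`-constant of `𝒢`. -/
def IsUVW {n : ℕ} {α : Type} (u v : Fin n → List α) (c : Cst n α) : Prop :=
  IsUV c ∨ IsW u v c

/-- The PCP instance `(u₁,v₁),…,(uₙ,vₙ)` has a solution. -/
def HasSolution {n : ℕ} {α : Type} (u v : Fin n → List α) : Prop :=
  ∃ is : List (Fin n), is ≠ [] ∧ (is.map u).flatten = (is.map v).flatten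

namespace GeneratorCancellation

variable {n : ℕ} {α : Type} {u v : Fin n → List α}

/-- Weight `1` on the constants `X, Y, D, C, I, S`, which cannot silently vanish, and `0` on all
other constants. -/
def weight : Cst n α → ℕ
  | .X | .Y | .D | .C | .I | .S => 1
  | _ => 0

/-- The number of occurrences of persistent constants in a process. -/
def persistent : Proc n α → ℕ
  | .nil => 0
  | .cst c => weight c
  | .seq P Q => persistent P + persistent Q
  | .par P Q => persistent P + persistent Q

theorem SC.persistent_eq {P Q : Proc n α} (h : SC P Q) : persistent P = persistent Q := by
  induction h <;> (try simp only [persistent] at *) <;> omega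

theorem Step.persistent_le {P Q : Proc n α} {l : Lab n α} (h : Step u v P l Q) :
    persistent Q ≤ persistent P := by
  induction h <;> simp only [persistent, K, weight] at * <;> omega

theorem GTrans.persistent_le {P Q : Proc n α} {l : Lab n α} (h : GTrans u v P l Q) :
    persistent Q ≤ persistent P := by
  obtain ⟨P', Q', h₁, h₂, h₃⟩ := h
  rw [SC.persistent_eq h₁, ← SC.persistent_eq h₃]
  exact Step.persistent_le h₂

theorem SilentStar.persistent_le {P Q : Proc n α} (h : SilentStar (GTrans u v) .tau P Q) :
    persistent Q ≤ persistent P := by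
  induction h with
  | refl => exact le_rfl
  | tail _ hs ih => exact (GTrans.persistent_le hs).trans ih

variable (u v) in
/-- Silent reachability with the target taken up to structural congruence. -/
def Reach (P Q : Proc n α) : Prop :=
  ∃ Q', SilentStar (GTrans u v) .tau P Q' ∧ SC Q' Q

theorem Reach.of_sc {P Q : Proc n α} (h : SC P Q) : Reach u v P Q := ⟨P, .refl, h⟩

theorem Reach.of_step {P Q : Proc n α} (h : Step u v P .tau Q) : Reach u v P Q :=
  ⟨Q, .single ⟨P, Q, .refl _, h, .refl _⟩, .refl _⟩

theorem Reach.trans {P Q R : Proc n α} (h₁ : Reach u v P Q) (h₂ : Reach u v Q R) :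
    Reach u v P R := by
  obtain ⟨Q', hPQ, hQ⟩ := h₁
  obtain ⟨R', hQR, hR⟩ := h₂
  rcases Relation.ReflTransGen.cases_head hQR with rfl | ⟨T, ⟨A, B, hA, hAB, hB⟩, hT⟩
  · exact ⟨Q', hPQ, hQ.trans hR⟩
  · exact ⟨R', (hPQ.tail ⟨A, B, hQ.trans hA, hAB, hB⟩).trans hT, hR⟩

/-- Reachability passes through any context that respects transitions and congruence. -/
theorem Reach.context (F : Proc n α → Proc n α)
    (hstep : ∀ {A B}, Step u v A .tau B → Step u v (F A) .tau (F B))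
    (hsc : ∀ {A B : Proc n α}, SC A B → SC (F A) (F B))
    {P Q : Proc n α} (h : Reach u v P Q) : Reach u v (F P) (F Q) := by
  obtain ⟨Q', hs, hc⟩ := h
  refine ⟨F Q', ?_, hsc hc⟩
  clear hc
  induction hs with
  | refl => exact .refl
  | tail _ hs ih =>
    obtain ⟨A, B, hA, hAB, hB⟩ := hs
    exact ih.tail ⟨F A, F B, hsc hA, hstep hAB, hsc hB⟩

theorem Reach.parR (R : Proc n α) {P Q : Proc n α} (h : Reach u v P Q) :
    Reach u v (.par R P) (.par R Q) :=
  h.context (fun A => .par R A) (fun s => .parR _ s) (fun c => .parCong (.refl _) c)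

theorem Reach.parL (R : Proc n α) {P Q : Proc n α} (h : Reach u v P Q) :
    Reach u v (.par P R) (.par Q R) :=
  h.context (fun A => .par A R) (fun s => .parL _ s) (fun c => .parCong c (.refl _))

theorem Reach.seqL (R : Proc n α) {P Q : Proc n α} (h : Reach u v P Q) :
    Reach u v (.seq P R) (.seq Q R) :=
  h.context (fun A => .seq A R) (fun s => .seqL _ s) (fun c => .seqCong c (.refl _))

theorem W_vanish (ω : List α) (k : Option (Fin n)) : Reach u v (K (.W ω k)) .nil := by
  induction ω with
  | cons a ω ih => exact (Reach.of_step (.wTa a ω k)).trans ih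
  | nil =>
    cases k with
    | none => exact .of_step .wE
    | some i => exact (Reach.of_step (.wTi [] i)).trans (.of_step .wE)

theorem cst_vanish (c : Cst n α) (h : weight c = 0) : Reach u v (K c) .nil := by
  have hZ : Reach u v (K (.Z : Cst n α)) .nil := .of_step .zE
  have hGv' : Reach u v (K (.Gv' : Cst n α)) .nil := (Reach.of_step .gv'Z).trans hZ
  cases c with
  | X | Y | D | C | I | S => simp [weight] at h
  | Z => exact hZ
  | C' => exact .of_step .c'E
  | G => exact .of_step .gE
  | G' => exact (Reach.of_step .g'Z).trans hZ
  | Gu => exact (Reach.of_step .guGv').trans hGv'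
  | Gv => exact .of_step .gvE
  | Gv' => exact hGv'
  | U i => exact (Reach.of_step (.uW i)).trans (W_vanish _ _)
  | V i => exact (Reach.of_step (.vW i)).trans (W_vanish _ _)
  | W ω k => exact W_vanish ω k

theorem vanish_of_persistent_eq_zero (Q : Proc n α) (h : persistent Q = 0) :
    Reach u v Q .nil := by
  induction Q with
  | nil => exact .of_sc (.refl _)
  | cst c => exact cst_vanish c h
  | seq A B ihA ihB =>
    simp only [persistent, Nat.add_eq_zero_iff] at h
    exact ((ihA h.1).seqL B).trans ((Reach.of_sc (.seqNilL B)).trans (ihB h.2))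
  | par A B ihA ihB =>
    simp only [persistent, Nat.add_eq_zero_iff] at h
    exact ((ihA h.1).parL B).trans ((Reach.of_sc (.parNil B)).trans (ihB h.2))

/-- Absorption of a component `Q` by a process `P` that can spawn a component `g`, when neither
`Q` nor `g` contains a persistent constant. The spawning step ensures that the silent path is
nonempty, so that its endpoint may be chosen to be `P` itself. -/
theorem absorb {P Q g : Proc n α} (hs : Step u v P .tau (.par P g))
    (hg : persistent g = 0) (hQ : persistent Q = 0) :
    SilentStar (GTrans u v) .tau (.par P Q) P := by
  have hr : Reach u v (.par (.par P g) Q) P :=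
    (Reach.of_sc (.parAssoc P g Q)).trans
      (((vanish_of_persistent_eq_zero (.par g Q) (by simp [persistent, hg, hQ])).parR P).trans
        (.of_sc ((SC.parComm _ _).trans (.parNil P))))
  obtain ⟨P', hstar, hc⟩ := hr
  have ht : Relation.TransGen (fun p q => GTrans u v p .tau q) (.par P Q) P' :=
    Relation.TransGen.head' ⟨_, _, .refl _, .parL Q hs, .refl _⟩ hstar
  obtain ⟨B, hB, A, E, hA, hAE, hE⟩ := Relation.TransGen.tail'_iff.1 ht
  exact hB.tail ⟨A, E, hA, hAE, hE.trans hc⟩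

end GeneratorCancellation

open GeneratorCancellation in
/-- Lemma 4 of the paper: for `P ∈ {D, C, C'}`, if `P ⟹ P‖Q` then `P‖Q ⟹ P`. -/
theorem generator_cancellation {n : ℕ} {α : Type} [Fintype α]
    (u v : Fin n → List α) (hu : ∀ i, u i ≠ []) (hv : ∀ i, v i ≠ [])
    (P : Proc n α) (hP : P = K Cst.D ∨ P = K Cst.C ∨ P = K Cst.C')
    (Q : Proc n α)
    (h : SilentStar (GTrans u v) Lab.tau P (.par P Q)) :
    SilentStar (GTrans u v) Lab.tau (.par P Q) P := by
  have hQ : persistent Q = 0 := by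
    have := SilentStar.persistent_le h
    simp only [persistent] at this
    omega
  rcases hP with rfl | rfl | rfl
  · exact absorb .dT rfl hQ
  · exact absorb .cG rfl hQ
  · exact absorb .c'G rfl hQ
end

section
/- In the process algebra 𝒢 built from a PCP instance INST: for all ℙ_u and ℙ_v, the processes D, D‖G_uℙ_u, D‖G_v'ℙ_vℙ_u, D‖Zℙ_vℙ_u, D‖ℙ_vℙ_u, and D‖Wℙ_vℙ_u (for any W-constant W) are all branching bisimilar to one another. -/
/-! ### Structural congruence and transitions -/

section Structural

variable {n : ℕ} {α : Type} {u v : Fin n → List α}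

/-- All leaves of the process are `ε`; equivalently, the process is congruent to `ε`. -/
def Null : Proc n α → Prop
  | .nil => True
  | .cst _ => False
  | .seq P Q => Null P ∧ Null Q
  | .par P Q => Null P ∧ Null Q

/-- The raw steps, completed by the rule that `Q` may move in `PQ` when `P` is null.  With this
rule structural congruence is a strong bisimulation, which fails for `Step`: the process `εP`
has no raw step. -/
inductive LStep (u v : Fin n → List α) : Proc n α → Lab n α → Proc n α → Prop where
  | cst {c ℓ P'} : Step u v (.cst c) ℓ P' → LStep u v (.cst c) ℓ P'
  | seqL {P ℓ P'} (Q) : LStep u v P ℓ P' → LStep u v (.seq P Q) ℓ (.seq P' Q)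
  | seqR {P Q ℓ Q'} : Null P → LStep u v Q ℓ Q' → LStep u v (.seq P Q) ℓ (.seq P Q')
  | parL {P ℓ P'} (Q) : LStep u v P ℓ P' → LStep u v (.par P Q) ℓ (.par P' Q)
  | parR {Q ℓ Q'} (P) : LStep u v Q ℓ Q' → LStep u v (.par P Q) ℓ (.par P Q')

theorem Step.toLStep {P : Proc n α} {ℓ P'} (h : Step u v P ℓ P') : LStep u v P ℓ P' := by
  induction h with
  | seqL Q _ ih => exact .seqL Q ih
  | parL Q _ ih => exact .parL Q ih
  | parR Q _ ih => exact .parR Q ih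
  | _ => exact .cst (by constructor)

theorem Null.sc {P : Proc n α} (h : Null P) : SC P .nil := by
  induction P with
  | nil => exact .refl _
  | cst c => exact h.elim
  | seq P Q ihP ihQ => exact (SC.seqCong (ihP h.1) (ihQ h.2)).trans (.seqNilL _)
  | par P Q ihP ihQ => exact (SC.parCong (ihP h.1) (ihQ h.2)).trans (.parNil _)

theorem SC.null_iff {P Q : Proc n α} (h : SC P Q) : Null P ↔ Null Q := by
  induction h with
  | refl => rfl
  | symm _ ih => exact ih.symm
  | trans _ _ ih₁ ih₂ => exact ih₁.trans ih₂
  | seqCong _ _ ih₁ ih₂ => exact and_congr ih₁ ih₂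
  | parCong _ _ ih₁ ih₂ => exact and_congr ih₁ ih₂
  | _ => simp only [Null]; tauto

theorem LStep.not_null {P : Proc n α} {ℓ P'} (h : LStep u v P ℓ P') : ¬ Null P := by
  induction h with
  | cst => exact id
  | seqL Q _ ih => exact fun h => ih h.1
  | seqR _ _ ih => exact fun h => ih h.2
  | parL Q _ ih => exact fun h => ih h.1
  | parR Q _ ih => exact fun h => ih h.2

/-- Structural congruence is a strong bisimulation for the completed steps. -/
theorem SC.lstep {P Q : Proc n α} (h : SC P Q) :
    (∀ ℓ P', LStep u v P ℓ P' → ∃ Q', LStep u v Q ℓ Q' ∧ SC P' Q') ∧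
    (∀ ℓ Q', LStep u v Q ℓ Q' → ∃ P', LStep u v P ℓ P' ∧ SC P' Q') := by
  induction h with
  | refl P => exact ⟨fun _ P' h => ⟨P', h, .refl _⟩, fun _ P' h => ⟨P', h, .refl _⟩⟩
  | symm _ ih =>
    refine ⟨fun ℓ P' h => ?_, fun ℓ P' h => ?_⟩
    · obtain ⟨Q', h₁, h₂⟩ := ih.2 _ _ h
      exact ⟨Q', h₁, h₂.symm⟩
    · obtain ⟨Q', h₁, h₂⟩ := ih.1 _ _ h
      exact ⟨Q', h₁, h₂.symm⟩
  | trans _ _ ih₁ ih₂ =>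
    refine ⟨fun ℓ P' h => ?_, fun ℓ P' h => ?_⟩
    · obtain ⟨Q', h₁, s₁⟩ := ih₁.1 _ _ h
      obtain ⟨R', h₂, s₂⟩ := ih₂.1 _ _ h₁
      exact ⟨R', h₂, s₁.trans s₂⟩
    · obtain ⟨Q', h₁, s₁⟩ := ih₂.2 _ _ h
      obtain ⟨R', h₂, s₂⟩ := ih₁.2 _ _ h₁
      exact ⟨R', h₂, s₂.trans s₁⟩
  | seqCong s₁ s₂ ih₁ ih₂ =>
    refine ⟨fun ℓ P' h => ?_, fun ℓ P' h => ?_⟩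
    · cases h with
      | seqL _ h =>
        obtain ⟨Q', h, s⟩ := ih₁.1 _ _ h
        exact ⟨_, .seqL _ h, .seqCong s s₂⟩
      | seqR hn h =>
        obtain ⟨Q', h, s⟩ := ih₂.1 _ _ h
        exact ⟨_, .seqR (s₁.null_iff.1 hn) h, .seqCong s₁ s⟩
    · cases h with
      | seqL _ h =>
        obtain ⟨Q', h, s⟩ := ih₁.2 _ _ h
        exact ⟨_, .seqL _ h, .seqCong s s₂⟩
      | seqR hn h =>
        obtain ⟨Q', h, s⟩ := ih₂.2 _ _ h
        exact ⟨_, .seqR (s₁.null_iff.2 hn) h, .seqCong s₁ s⟩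
  | parCong s₁ s₂ ih₁ ih₂ =>
    refine ⟨fun ℓ P' h => ?_, fun ℓ P' h => ?_⟩
    · cases h with
      | parL _ h =>
        obtain ⟨Q', h, s⟩ := ih₁.1 _ _ h
        exact ⟨_, .parL _ h, .parCong s s₂⟩
      | parR _ h =>
        obtain ⟨Q', h, s⟩ := ih₂.1 _ _ h
        exact ⟨_, .parR _ h, .parCong s₁ s⟩
    · cases h with
      | parL _ h =>
        obtain ⟨Q', h, s⟩ := ih₁.2 _ _ h
        exact ⟨_, .parL _ h, .parCong s s₂⟩
      | parR _ h =>
        obtain ⟨Q', h, s⟩ := ih₂.2 _ _ h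
        exact ⟨_, .parR _ h, .parCong s₁ s⟩
  | seqAssoc P Q R =>
    refine ⟨fun ℓ P' h => ?_, fun ℓ P' h => ?_⟩
    · cases h with
      | seqL _ h =>
        cases h with
        | seqL _ h => exact ⟨_, .seqL _ h, .seqAssoc _ _ _⟩
        | seqR hn h => exact ⟨_, .seqR hn (.seqL _ h), .seqAssoc _ _ _⟩
      | seqR hn h => exact ⟨_, .seqR hn.1 (.seqR hn.2 h), .seqAssoc _ _ _⟩
    · cases h with
      | seqL _ h => exact ⟨_, .seqL _ (.seqL _ h), .seqAssoc _ _ _⟩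
      | seqR hn h =>
        cases h with
        | seqL _ h => exact ⟨_, .seqL _ (.seqR hn h), .seqAssoc _ _ _⟩
        | seqR hn' h => exact ⟨_, .seqR ⟨hn, hn'⟩ h, .seqAssoc _ _ _⟩
  | parAssoc P Q R =>
    refine ⟨fun ℓ P' h => ?_, fun ℓ P' h => ?_⟩
    · cases h with
      | parL _ h =>
        cases h with
        | parL _ h => exact ⟨_, .parL _ h, .parAssoc _ _ _⟩
        | parR _ h => exact ⟨_, .parR _ (.parL _ h), .parAssoc _ _ _⟩
      | parR _ h => exact ⟨_, .parR _ (.parR _ h), .parAssoc _ _ _⟩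
    · cases h with
      | parL _ h => exact ⟨_, .parL _ (.parL _ h), .parAssoc _ _ _⟩
      | parR _ h =>
        cases h with
        | parL _ h => exact ⟨_, .parL _ (.parR _ h), .parAssoc _ _ _⟩
        | parR _ h => exact ⟨_, .parR _ h, .parAssoc _ _ _⟩
  | parComm P Q =>
    refine ⟨fun ℓ P' h => ?_, fun ℓ P' h => ?_⟩ <;>
    · cases h with
      | parL _ h => exact ⟨_, .parR _ h, .parComm _ _⟩
      | parR _ h => exact ⟨_, .parL _ h, .parComm _ _⟩
  | seqNilL P =>
    refine ⟨fun ℓ P' h => ?_, fun ℓ P' h => ⟨_, .seqR trivial h, .seqNilL _⟩⟩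
    cases h with
    | seqL _ h => exact (h.not_null trivial).elim
    | seqR _ h => exact ⟨_, h, .seqNilL _⟩
  | seqNilR P =>
    refine ⟨fun ℓ P' h => ?_, fun ℓ P' h => ⟨_, .seqL _ h, .seqNilR _⟩⟩
    cases h with
    | seqL _ h => exact ⟨_, h, .seqNilR _⟩
    | seqR _ h => exact (h.not_null trivial).elim
  | parNil P =>
    refine ⟨fun ℓ P' h => ?_, fun ℓ P' h => ⟨_, .parR _ h, .parNil _⟩⟩
    cases h with
    | parL _ h => exact (h.not_null trivial).elim
    | parR _ h => exact ⟨_, h, .parNil _⟩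

/-- A transition of `𝒢` is a completed step of the given representative, up to congruence of the
target only. -/
theorem GTrans.lstep {P : Proc n α} {ℓ P'} (h : GTrans u v P ℓ P') :
    ∃ P'', LStep u v P ℓ P'' ∧ SC P'' P' := by
  obtain ⟨P₁, P₂, s₁, h, s₂⟩ := h
  obtain ⟨P₃, h, s₃⟩ := (SC.lstep s₁).2 _ _ h.toLStep
  exact ⟨P₃, h, s₃.trans s₂⟩

theorem Step.gtrans {P : Proc n α} {ℓ P'} (h : Step u v P ℓ P') : GTrans u v P ℓ P' :=
  ⟨_, _, .refl _, h, .refl _⟩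

theorem GTrans.sc_left {P Q : Proc n α} {ℓ P'} (s : SC Q P) (h : GTrans u v P ℓ P') :
    GTrans u v Q ℓ P' := by
  obtain ⟨P₁, P₂, s₁, h, s₂⟩ := h
  exact ⟨P₁, P₂, s.trans s₁, h, s₂⟩

theorem GTrans.sc_right {P Q : Proc n α} {ℓ P'} (h : GTrans u v P ℓ P') (s : SC P' Q) :
    GTrans u v P ℓ Q := by
  obtain ⟨P₁, P₂, s₁, h, s₂⟩ := h
  exact ⟨P₁, P₂, s₁, h, s₂.trans s⟩

theorem GTrans.seqL {P : Proc n α} {ℓ P'} (h : GTrans u v P ℓ P') (Q) :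
    GTrans u v (.seq P Q) ℓ (.seq P' Q) := by
  obtain ⟨P₁, P₂, s₁, h, s₂⟩ := h
  exact ⟨_, _, .seqCong s₁ (.refl _), h.seqL Q, .seqCong s₂ (.refl _)⟩

theorem GTrans.parL {P : Proc n α} {ℓ P'} (h : GTrans u v P ℓ P') (Q) :
    GTrans u v (.par P Q) ℓ (.par P' Q) := by
  obtain ⟨P₁, P₂, s₁, h, s₂⟩ := h
  exact ⟨_, _, .parCong s₁ (.refl _), h.parL Q, .parCong s₂ (.refl _)⟩

theorem GTrans.parR {P : Proc n α} {ℓ P'} (h : GTrans u v P ℓ P') (Q) :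
    GTrans u v (.par Q P) ℓ (.par Q P') := by
  obtain ⟨P₁, P₂, s₁, h, s₂⟩ := h
  exact ⟨_, _, .parCong (.refl _) s₁, h.parR Q, .parCong (.refl _) s₂⟩

theorem LStep.gtrans {P : Proc n α} {ℓ P'} (h : LStep u v P ℓ P') : GTrans u v P ℓ P' := by
  induction h with
  | cst h => exact h.gtrans
  | seqL Q _ ih => exact ih.seqL Q
  | parL Q _ ih => exact ih.parL Q
  | parR Q _ ih => exact ih.parR Q
  | seqR hn _ ih =>
    have s : ∀ R, SC (.seq _ R) R := fun R => (SC.seqCong hn.sc (.refl R)).trans (.seqNilL _)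
    exact (ih.sc_left (s _)).sc_right (s _).symm

/-! ### Silent reachability up to structural congruence -/

/-- Silent reachability where congruence steps are allowed as well. -/
def Reach (u v : Fin n → List α) : Proc n α → Proc n α → Prop :=
  Relation.ReflTransGen (fun P Q => SC P Q ∨ GTrans u v P .tau Q)

theorem Reach.refl (P : Proc n α) : Reach u v P P := Relation.ReflTransGen.refl

theorem Reach.trans {P Q R : Proc n α} (h₁ : Reach u v P Q) (h₂ : Reach u v Q R) :
    Reach u v P R := Relation.ReflTransGen.trans h₁ h₂

theorem SC.reach {P Q : Proc n α} (h : SC P Q) : Reach u v P Q := .single (.inl h)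

theorem GTrans.reach {P Q : Proc n α} (h : GTrans u v P .tau Q) : Reach u v P Q :=
  .single (.inr h)

theorem Step.reach {P Q : Proc n α} (h : Step u v P .tau Q) : Reach u v P Q := h.gtrans.reach

theorem Reach.seqL {P P' : Proc n α} (h : Reach u v P P') (Q) :
    Reach u v (.seq P Q) (.seq P' Q) := by
  refine Relation.ReflTransGen.lift (fun P => Proc.seq P Q) (fun a b hab => ?_) _ _ h
  exact hab.imp (fun s => .seqCong s (.refl _)) (fun t => t.seqL Q)

theorem Reach.parL {P P' : Proc n α} (h : Reach u v P P') (Q) :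
    Reach u v (.par P Q) (.par P' Q) := by
  refine Relation.ReflTransGen.lift (fun P => Proc.par P Q) (fun a b hab => ?_) _ _ h
  exact hab.imp (fun s => .parCong s (.refl _)) (fun t => t.parL Q)

theorem Reach.parR {P P' : Proc n α} (h : Reach u v P P') (Q) :
    Reach u v (.par Q P) (.par Q P') := by
  refine Relation.ReflTransGen.lift (fun P => Proc.par Q P) (fun a b hab => ?_) _ _ h
  exact hab.imp (fun s => .parCong (.refl _) s) (fun t => t.parR Q)

theorem Reach.silent {P Q : Proc n α} (h : Reach u v P Q) :
    ∃ Q₀, SilentStar (GTrans u v) .tau P Q₀ ∧ SC Q₀ Q := by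
  induction h with
  | refl => exact ⟨P, .refl, .refl _⟩
  | tail _ h ih =>
    obtain ⟨Q₀, h₁, s⟩ := ih
    rcases h with s' | t
    · exact ⟨Q₀, h₁, s.trans s'⟩
    · exact ⟨_, h₁.tail (t.sc_left s), .refl _⟩

/-- To show that a symmetric, congruence-invariant relation is a branching bisimulation, answers
up to `Reach` suffice. -/
theorem isBranchingBisim_of_reach {B : Proc n α → Proc n α → Prop}
    (symm : ∀ P Q, B P Q → B Q P) (sc : ∀ P Q Q', B P Q → SC Q Q' → B P Q')
    (H : ∀ P Q, B P Q → ∀ ℓ P', GTrans u v P ℓ P' → (ℓ = .tau ∧ B P' Q) ∨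
      ∃ Q'' Q', Reach u v Q Q'' ∧ GTrans u v Q'' ℓ Q' ∧ B P Q'' ∧ B P' Q') :
    IsBranchingBisim (GTrans u v) .tau B := by
  have key : ∀ P Q, B P Q → ∀ ℓ P', GTrans u v P ℓ P' → (ℓ = .tau ∧ B P' Q) ∨
      ∃ Q'' Q', SilentStar (GTrans u v) .tau Q Q'' ∧ GTrans u v Q'' ℓ Q' ∧
        B P Q'' ∧ B P' Q' := by
    intro P Q h ℓ P' t
    rcases H P Q h ℓ P' t with h | ⟨Q'', Q', r, t', b, b'⟩
    · exact .inl h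
    · obtain ⟨Q₀, r, s⟩ := r.silent
      exact .inr ⟨Q₀, Q', r, t'.sc_left s, sc _ _ _ b s.symm, b'⟩
  intro P Q h
  refine ⟨key P Q h, fun ℓ Q' t => ?_⟩
  rcases key Q P (symm _ _ h) ℓ Q' t with ⟨e, h⟩ | ⟨P'', P', r, t', b, b₂⟩
  · exact .inl ⟨e, symm _ _ h⟩
  · exact .inr ⟨P'', P', r, t', symm _ _ b, symm _ _ b₂⟩

/-- Processes that silently reach each other are branching bisimilar. -/
theorem brBisim_of_reach {P Q : Proc n α} (h₁ : Reach u v P Q) (h₂ : Reach u v Q P) :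
    BrBisim (GTrans u v) .tau P Q := by
  refine ⟨fun P Q => Reach u v P Q ∧ Reach u v Q P, isBranchingBisim_of_reach ?_ ?_ ?_, h₁, h₂⟩
  · exact fun _ _ h => ⟨h.2, h.1⟩
  · exact fun _ _ _ h s => ⟨h.1.trans s.reach, s.symm.reach.trans h.2⟩
  · exact fun P Q h ℓ P' t => .inr ⟨P, P', h.2, t, ⟨.refl _, .refl _⟩, .refl _, .refl _⟩

/-! ### Generating and discharging sequences of constants -/

theorem reach_W_suffix (k : Option (Fin n)) {ω w : List α} (h : ω <:+ w) :
    Reach u v (K (.W w k)) (K (.W ω k)) := by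
  obtain ⟨t, rfl⟩ := h
  induction t with
  | nil => exact .refl _
  | cons a t ih => exact (Step.wTa a (t ++ ω) k).reach.trans ih

theorem reach_W_none (ω : List α) (k : Option (Fin n)) :
    Reach u v (K (.W ω k)) (K (.W ω none)) := by
  cases k with
  | none => exact .refl _
  | some i => exact (Step.wTi ω i).reach

theorem reach_W_nil (ω : List α) (k : Option (Fin n)) : Reach u v (K (.W ω k)) .nil :=
  ((reach_W_none ω k).trans (reach_W_suffix none (List.nil_suffix))).trans Step.wE.reach

theorem reach_UV_nil {x : Cst n α} (h : IsUV x) : Reach u v (K x) .nil := by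
  rcases h with ⟨i, rfl⟩ | ⟨i, rfl⟩
  · exact (Step.uW i).reach.trans (reach_W_nil _ _)
  · exact (Step.vW i).reach.trans (reach_W_nil _ _)

theorem reach_seqComp_nil (l : List (Cst n α)) (h : ∀ x ∈ l, Reach u v (K x) .nil) :
    Reach u v (seqComp l) .nil := by
  induction l with
  | nil => exact .refl _
  | cons x l ih =>
    exact (((h x (by simp)).seqL _).trans (SC.seqNilL _).reach).trans
      (ih fun y hy => h y (by simp [hy]))

/-- A generator `g` that can emit each constant of `l` can emit all of `l`. -/
theorem reach_generate {g : Cst n α} (l l₀ : List (Cst n α))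
    (h : ∀ x ∈ l, Step u v (K g) .tau (.seq (K g) (K x))) :
    Reach u v (.seq (K g) (seqComp l₀)) (.seq (K g) (seqComp (l ++ l₀))) := by
  induction l with
  | nil => exact .refl _
  | cons x l ih =>
    refine (ih fun y hy => h y (by simp [hy])).trans ?_
    exact ((h x (by simp)).reach.seqL _).trans (SC.seqAssoc _ _ _).reach

theorem reach_generate' {g : Cst n α} (l : List (Cst n α))
    (h : ∀ x ∈ l, Step u v (K g) .tau (.seq (K g) (K x))) :
    Reach u v (K g) (.seq (K g) (seqComp l)) := by
  simpa using (SC.seqNilR (K g)).symm.reach.trans (reach_generate (u := u) (v := v) l [] h)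

/-- The `U`-part `ℙ_u` as a list of constants. -/
abbrev lU (lu : List (Fin n)) : List (Cst n α) := lu.map fun i => Cst.U i

/-- The sequence `ℙ_vℙ_u` as a list of constants. -/
abbrev lVU (lv lu : List (Fin n)) : List (Cst n α) :=
  (lv.map fun i => Cst.V i) ++ (lu.map fun i => Cst.U i)

theorem D_reach_Gu (lu : List (Fin n)) :
    Reach u v (K .D) (.par (K .D) (.seq (K .Gu) (seqComp (lU lu)))) := by
  refine Step.dT.reach.trans (Reach.parR (reach_generate' _ ?_) _)
  intro x hx
  obtain ⟨i, -, rfl⟩ := List.mem_map.1 hx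
  exact .guT i

theorem Gu_reach_Gv' (lv lu : List (Fin n)) :
    Reach u v (.seq (K .Gu) (seqComp (lU lu))) (.seq (K .Gv') (seqComp (lVU lv lu))) := by
  refine (Step.guGv'.reach.seqL _).trans (reach_generate _ _ ?_)
  intro x hx
  obtain ⟨i, -, rfl⟩ := List.mem_map.1 hx
  exact .gv'T i

theorem Z_reach (P : Proc n α) : Reach u v (.seq (K .Z) P) P :=
  (Step.zE.reach.seqL _).trans (SC.seqNilL _).reach

theorem lVU_reach_nil (lv lu : List (Fin n)) : Reach u v (seqComp (lVU lv lu)) .nil := by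
  refine reach_seqComp_nil _ fun x hx => reach_UV_nil ?_
  rcases List.mem_append.1 hx with hx | hx
  · obtain ⟨i, -, rfl⟩ := List.mem_map.1 hx
    exact .inr ⟨i, rfl⟩
  · obtain ⟨i, -, rfl⟩ := List.mem_map.1 hx
    exact .inl ⟨i, rfl⟩

theorem par_nil_sc (P : Proc n α) : SC (.par P .nil) P := (SC.parComm _ _).trans (.parNil _)

/-- The constant `c` can silently spawn the sequence `l` in parallel. -/
def Spawns (u v : Fin n → List α) (c : Cst n α) (l : List (Cst n α)) : Prop :=
  Reach u v (K c) (.par (K c) (seqComp l))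

theorem D_spawns (lv lu : List (Fin n)) : Spawns u v .D (lVU lv lu) :=
  (((D_reach_Gu lu).trans ((Gu_reach_Gv' lv lu).parR _)).trans
    ((Step.gv'Z.reach.seqL _).parR _)).trans ((Z_reach _).parR _)

theorem C_spawns (l : List (Cst n α)) (h : ∀ x ∈ l, IsUV x) : Spawns u v .C l := by
  refine Step.cG.reach.trans (Reach.parR ?_ _)
  refine (reach_generate' l fun x hx => ?_).trans
    ((Step.gE.reach.seqL _).trans (SC.seqNilL _).reach)
  rcases h x hx with ⟨i, rfl⟩ | ⟨i, rfl⟩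
  · exact .gU i
  · exact .gV i

theorem C'_spawns (l : List (Cst n α)) (h : ∀ x ∈ l, IsUV x ∨ ∃ ω k, x = .W ω k) :
    Spawns u v .C' l := by
  refine Step.c'G.reach.trans (Reach.parR ?_ _)
  refine (reach_generate' l fun x hx => ?_).trans
    ((Step.g'Z.reach.seqL _).trans (Z_reach _))
  rcases h x hx with (⟨i, rfl⟩ | ⟨i, rfl⟩) | ⟨ω, k, rfl⟩
  · exact .g'U i
  · exact .g'V i
  · constructor

/-- Spawning a head `x` that evolves silently to `y`. -/
theorem Spawns.head {c x y : Cst n α} {l : List (Cst n α)} (h : Spawns u v c (x :: l))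
    (r : Reach u v (K x) (K y)) : Spawns u v c (y :: l) :=
  Reach.trans h ((r.seqL _).parR _)

/-- The word `ω` is a suffix of some word of the instance. -/
def Suff (u v : Fin n → List α) (ω : List α) : Prop := ∃ i, ω <:+ u i ∨ ω <:+ v i

theorem Suff.tail {a : α} {ω : List α} (h : Suff u v (a :: ω)) : Suff u v ω := by
  obtain ⟨i, h⟩ := h
  exact ⟨i, h.imp (fun h => (List.suffix_cons a ω).trans h)
    (fun h => (List.suffix_cons a ω).trans h)⟩

theorem Suff.nil {ω : List α} (h : Suff u v ω) : Suff u v [] :=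
  h.imp fun _ _ => .inl (List.nil_suffix)

theorem Suff.head_none {ω : List α} (h : Suff u v ω) :
    ∃ x, IsUV x ∧ Reach u v (K x) (K (.W ω none)) := by
  obtain ⟨i, h | h⟩ := h
  · exact ⟨.U i, .inl ⟨i, rfl⟩, ((Step.uW i).reach.trans (reach_W_none _ _)).trans
      (reach_W_suffix _ h)⟩
  · exact ⟨.V i, .inr ⟨i, rfl⟩, ((Step.vW i).reach.trans (reach_W_none _ _)).trans
      (reach_W_suffix _ h)⟩

theorem head_some (i : Fin n) :
    ∃ x, IsUV x ∧ Reach u v (K x) (K (.W [] (some i))) :=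
  ⟨.U i, .inl ⟨i, rfl⟩, (Step.uW i).reach.trans (reach_W_suffix _ (List.nil_suffix))⟩

/-! ### The bisimulation for mismatched `W`-constants -/

/-- The admissible sequences, those handled by the bisimulation: `U`- and `V`-constants, possibly preceded by one
`W`-constant. -/
def AF (u v : Fin n → List α) (l : List (Cst n α)) : Prop :=
  ∃ m, (∀ x ∈ m, IsUV x) ∧ (l = m ∨ ∃ ω k, l = .W ω k :: m ∧ Suff u v ω)

theorem AF.nil : AF u v [] := ⟨[], by simp, .inl rfl⟩

theorem AF.cons {ω : List α} {k} {m : List (Cst n α)} (h : ∀ x ∈ m, IsUV x) (s : Suff u v ω) :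
    AF u v (.W ω k :: m) := ⟨m, h, .inr ⟨ω, k, rfl, s⟩⟩

theorem AF.reach_nil {l : List (Cst n α)} (h : AF u v l) : Reach u v (seqComp l) .nil := by
  obtain ⟨m, hm, rfl | ⟨ω, k, rfl, -⟩⟩ := h
  · exact reach_seqComp_nil _ fun x hx => reach_UV_nil (hm x hx)
  · refine reach_seqComp_nil _ fun x hx => ?_
    rcases List.mem_cons.1 hx with rfl | hx
    · exact reach_W_nil _ _
    · exact reach_UV_nil (hm x hx)

/-- The controllers that can spawn sequences of their own. -/
def IsGen (c : Cst n α) : Prop := c = .D ∨ c = .C ∨ c = .C'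

theorem IsGen.spawns_single {c x : Cst n α} (h : IsGen c) (hx : IsUV x) :
    Spawns u v c [x] := by
  rcases h with rfl | rfl | rfl
  · rcases hx with ⟨i, rfl⟩ | ⟨i, rfl⟩
    · exact D_spawns [] [i]
    · exact D_spawns [i] []
  · exact C_spawns _ (by simpa using hx)
  · exact C'_spawns _ (by simpa using .inl hx)

/-- The sequences `l₁`, `l₂` that are interchangeable next to the controller `c`.  Next to
a generating controller all admissible sequences are.  `I` hides the index of a leading `W`-constant, since
it offers all index labels itself, and `S` likewise hides its word. -/
inductive Exch (u v : Fin n → List α) : Cst n α → List (Cst n α) → List (Cst n α) → Prop where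
  | gen {c l₁ l₂} : IsGen c → AF u v l₁ → AF u v l₂ → Exch u v c l₁ l₂
  | idx {ω m} (k₁ k₂) : (∀ x ∈ m, IsUV x) → Suff u v ω →
      Exch u v .I (.W ω k₁ :: m) (.W ω k₂ :: m)
  | wrd {ω₁ ω₂ m} (k) : (∀ x ∈ m, IsUV x) → Suff u v ω₁ → Suff u v ω₂ →
      Exch u v .S (.W ω₁ k :: m) (.W ω₂ k :: m)
  | same {c l} : Exch u v c l l

theorem Exch.symm {c : Cst n α} {l₁ l₂} (h : Exch u v c l₁ l₂) : Exch u v c l₂ l₁ := by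
  cases h with
  | gen h h₁ h₂ => exact .gen h h₂ h₁
  | idx k₁ k₂ h s => exact .idx k₂ k₁ h s
  | wrd k h s₁ s₂ => exact .wrd k h s₂ s₁
  | same => exact .same

/-- The process `c‖l‖R`. -/
def cfg (c : Cst n α) (l : List (Cst n α)) (R : Proc n α) : Proc n α :=
  .par (.par (K c) (seqComp l)) R

/-- The bisimulation: interchangeable sequences next to a controller, in an arbitrary parallel
context, together with structural congruence. -/
def BB (u v : Fin n → List α) (P Q : Proc n α) : Prop :=
  SC P Q ∨ ∃ c l₁ l₂ R, Exch u v c l₁ l₂ ∧ SC P (cfg c l₁ R) ∧ SC Q (cfg c l₂ R)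

theorem BB.symm {P Q : Proc n α} (h : BB u v P Q) : BB u v Q P := by
  rcases h with h | ⟨c, l₁, l₂, R, h, s₁, s₂⟩
  · exact .inl h.symm
  · exact .inr ⟨c, l₂, l₁, R, h.symm, s₂, s₁⟩

theorem BB.sc_right {P Q Q' : Proc n α} (h : BB u v P Q) (s : SC Q Q') : BB u v P Q' := by
  rcases h with h | ⟨c, l₁, l₂, R, h, s₁, s₂⟩
  · exact .inl (h.trans s)
  · exact .inr ⟨c, l₁, l₂, R, h, s₁, s.symm.trans s₂⟩

theorem BB.sc_left {P Q P' : Proc n α} (s : SC P' P) (h : BB u v P Q) : BB u v P' Q :=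
  (h.symm.sc_right s.symm).symm

theorem Exch.bb {c : Cst n α} {l₁ l₂} (h : Exch u v c l₁ l₂) (R) :
    BB u v (cfg c l₁ R) (cfg c l₂ R) := .inr ⟨c, l₁, l₂, R, h, .refl _, .refl _⟩

/-- A move of `P` to `P'` is answered by `Q`. -/
def Ans (u v : Fin n → List α) (P Q : Proc n α) (ℓ : Lab n α) (P' : Proc n α) : Prop :=
  (ℓ = .tau ∧ BB u v P' Q) ∨
    ∃ Q'' Q', Reach u v Q Q'' ∧ GTrans u v Q'' ℓ Q' ∧ BB u v P Q'' ∧ BB u v P' Q'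

theorem cfg_reach {c : Cst n α} {l₁ l₂} (h : Reach u v (seqComp l₁) (seqComp l₂)) (R) :
    Reach u v (cfg c l₁ R) (cfg c l₂ R) := (h.parR _).parL _

/-- A generating controller can exchange its sequence for any one that it spawns. -/
theorem cfg_exchange {c : Cst n α} {l₁ l₂} (h₁ : AF u v l₁) (h₂ : Spawns u v c l₂) (R) :
    Reach u v (cfg c l₁ R) (cfg c l₂ R) :=
  Reach.parL (((h₁.reach_nil.parR _).trans (par_nil_sc _).reach).trans h₂) R

theorem cfg_seq_trans {c : Cst n α} {l₁ l₂ ℓ} (h : GTrans u v (seqComp l₁) ℓ (seqComp l₂)) (R) :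
    GTrans u v (cfg c l₁ R) ℓ (cfg c l₂ R) := (h.parR _).parL _

theorem cons_trans {x y : Cst n α} {ℓ} (h : Step u v (K x) ℓ (K y)) (m) :
    GTrans u v (seqComp (x :: m)) ℓ (seqComp (y :: m)) := (h.seqL _).gtrans

theorem cons_reach {x y : Cst n α} (h : Reach u v (K x) (K y)) (m) :
    Reach u v (seqComp (x :: m)) (seqComp (y :: m)) := h.seqL _

theorem cons_nil_trans {x : Cst n α} {ℓ} (h : Step u v (K x) ℓ .nil) (m) :
    GTrans u v (seqComp (x :: m)) ℓ (seqComp m) :=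
  GTrans.sc_right (h.seqL _).gtrans (.seqNilL _)

theorem lstep_cons {x : Cst n α} {m ℓ P'} (h : LStep u v (seqComp (x :: m)) ℓ P') :
    ∃ P'', Step u v (K x) ℓ P'' ∧ P' = .seq P'' (seqComp m) := by
  cases h with
  | seqL _ h =>
    cases h with
    | cst h => exact ⟨_, h, rfl⟩
  | seqR h _ => exact h.elim

/-- The moves of a `W`-constant. -/
theorem step_W {ω : List α} {k} {ℓ} {P' : Proc n α} (h : Step u v (K (.W ω k)) ℓ P') :
    (∃ a ω', ω = a :: ω' ∧ (ℓ = .ltr a ∨ ℓ = .tau) ∧ P' = K (.W ω' k)) ∨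
    (∃ i, k = some i ∧ (ℓ = .idx i ∨ ℓ = .tau) ∧ P' = K (.W ω none)) ∨
    (ω = [] ∧ k = none ∧ ℓ = .tau ∧ P' = .nil) := by
  cases h <;> simp

/-- The moves of an admissible sequence: it stays admissible, and a visible label can also be
produced by a sequence that every generating controller spawns. -/
theorem AF.lstep {l : List (Cst n α)} (h : AF u v l) {ℓ P'} (t : LStep u v (seqComp l) ℓ P') :
    ∃ l', AF u v l' ∧ SC P' (seqComp l') ∧
      (ℓ = .tau ∨ ∃ l₁ l₂, AF u v l₁ ∧ AF u v l₂ ∧ GTrans u v (seqComp l₁) ℓ (seqComp l₂) ∧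
        ∀ c, IsGen c → Spawns u v c l₁) := by
  obtain ⟨m, hm, rfl | ⟨ω, k, rfl, hs⟩⟩ := h
  · cases l with
    | nil => cases t
    | cons x m =>
      obtain ⟨P'', t₀, rfl⟩ := lstep_cons t
      have hm' : ∀ y ∈ m, IsUV y := fun y hy => hm y (by simp [hy])
      rcases hm x (by simp) with ⟨i, rfl⟩ | ⟨i, rfl⟩
      · cases t₀
        exact ⟨_, .cons hm' ⟨i, .inl (List.suffix_refl _)⟩, .refl _, .inl rfl⟩
      · cases t₀
        exact ⟨_, .cons hm' ⟨i, .inr (List.suffix_refl _)⟩, .refl _, .inl rfl⟩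
  · obtain ⟨P'', t₀, rfl⟩ := lstep_cons t
    have hnil : ∀ y ∈ ([] : List (Cst n α)), IsUV y := by simp
    rcases step_W t₀ with ⟨a, ω', rfl, hl, rfl⟩ | ⟨i, rfl, hl, rfl⟩ | ⟨rfl, rfl, rfl, rfl⟩
    · refine ⟨.W ω' k :: m, .cons hm hs.tail, .refl _, ?_⟩
      rcases hl with rfl | rfl
      · refine .inr ⟨[.W (a :: ω') none], [.W ω' none], .cons hnil hs, .cons hnil hs.tail,
          cons_trans (.wA a ω' none) [], fun c hc => ?_⟩
        obtain ⟨x, hx, r⟩ := hs.head_none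
        exact (hc.spawns_single hx).head r
      · exact .inl rfl
    · refine ⟨.W ω none :: m, .cons hm hs, .refl _, ?_⟩
      rcases hl with rfl | rfl
      · refine .inr ⟨[.W [] (some i)], [.W [] none], .cons hnil hs.nil, .cons hnil hs.nil,
          cons_trans (.wI [] i) [], fun c hc => ?_⟩
        obtain ⟨x, hx, r⟩ := head_some (u := u) (v := v) i
        exact (hc.spawns_single hx).head r
      · exact .inl rfl
    · exact ⟨m, ⟨m, hm, .inl rfl⟩, .seqNilL _, .inl rfl⟩

theorem cfg_par_sc (c x : Cst n α) (l) (R : Proc n α) :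
    SC (.par (.par (.par (K c) (K x)) (seqComp l)) R) (cfg c l (.par (K x) R)) := by
  refine .trans (.parCong ?_ (.refl R)) (.parAssoc _ _ _)
  exact (SC.parAssoc _ _ _).trans ((SC.parCong (.refl _) (.parComm _ _)).trans
    (SC.parAssoc _ _ _).symm)

/-- A controller move that spawns a constant `x` next to the controller is copied. -/
theorem ans_spawn {c x : Cst n α} {l₁ l₂} (h : Exch u v c l₁ l₂) (R : Proc n α) {ℓ}
    (t : Step u v (K c) ℓ (.par (K c) (K x))) :
    Ans u v (cfg c l₁ R) (cfg c l₂ R) ℓ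
      (.par (.par (.par (K c) (K x)) (seqComp l₁)) R) := by
  refine .inr ⟨cfg c l₂ R, cfg c l₂ (.par (K x) R), .refl _, ?_, h.bb R, ?_⟩
  · exact ((t.gtrans.parL _).parL _).sc_right (cfg_par_sc _ _ _ _)
  · exact BB.sc_left (cfg_par_sc _ _ _ _) (h.bb _)

/-- A controller move to a controller `d` is answered by first silently changing the sequence. -/
theorem ans_ctrl {c d : Cst n α} {l₁ l₂ l₃} (R : Proc n α) {ℓ}
    (t : Step u v (K c) ℓ (K d)) (r : Reach u v (cfg c l₂ R) (cfg c l₃ R))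
    (h₁ : Exch u v c l₁ l₃) (h₂ : Exch u v d l₁ l₃) :
    Ans u v (cfg c l₁ R) (cfg c l₂ R) ℓ (cfg d l₁ R) :=
  .inr ⟨_, cfg d l₃ R, r, (t.gtrans.parL _).parL _, h₁.bb R, h₂.bb R⟩

theorem ans_gen_ctrl {c : Cst n α} {l₁ l₂} (hc : IsGen c) (h₁ : AF u v l₁) (h₂ : AF u v l₂)
    (R : Proc n α) {ℓ P'} (t : Step u v (K c) ℓ P') :
    Ans u v (cfg c l₁ R) (cfg c l₂ R) ℓ (.par (.par P' (seqComp l₁)) R) := by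
  have hg := Exch.gen hc h₁ h₂
  rcases hc with rfl | rfl | rfl
  · cases t with
    | dT => exact ans_spawn hg R .dT
    | dD => exact ans_ctrl R .dD (.refl _) hg (.gen (.inr (.inl rfl)) h₁ h₂)
  · have hC : IsGen (.C : Cst n α) := .inr (.inl rfl)
    cases t with
    | cG => exact ans_spawn hg R .cG
    | cGv => exact ans_spawn hg R .cGv
    | cI =>
      have h₁' := h₁
      obtain ⟨m, hm, rfl | ⟨ω, k, rfl, hs⟩⟩ := h₁
      · exact ans_ctrl R .cI (cfg_exchange h₂ (C_spawns _ hm) R) .same .same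
      · obtain ⟨x, hx, r⟩ := hs.head_none
        -- `C` can only spawn matching indices; next to `I` the index is irrelevant.
        have sp : Spawns u v .C (.W ω none :: m) := (C_spawns (x :: m) (by
          intro y hy
          rcases List.mem_cons.1 hy with rfl | hy
          exacts [hx, hm y hy])).head r
        exact ans_ctrl R .cI (cfg_exchange h₂ sp R) (.gen hC h₁' (.cons hm hs))
          (.idx _ _ hm hs)
    | cS =>
      have h₁' := h₁
      obtain ⟨m, hm, rfl | ⟨ω, k, rfl, hs⟩⟩ := h₁
      · exact ans_ctrl R .cS (cfg_exchange h₂ (C_spawns _ hm) R) .same .same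
      · obtain ⟨x, hx, r⟩ : ∃ x, IsUV x ∧ Reach u v (K x) (K (.W [] k)) := by
          -- Next to `S` the word is irrelevant, so the empty word with the right index will do.
          cases k with
          | none => exact hs.nil.head_none
          | some i => exact head_some i
        have sp : Spawns u v .C (.W [] k :: m) := (C_spawns (x :: m) (by
          intro y hy
          rcases List.mem_cons.1 hy with rfl | hy
          exacts [hx, hm y hy])).head r
        exact ans_ctrl R .cS (cfg_exchange h₂ sp R) (.gen hC h₁' (.cons hm hs.nil))
          (.wrd _ hm hs hs.nil)
  · cases t with
    | c'G => exact ans_spawn hg R .c'G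
    | c'E =>
      have sp : Spawns u v .C' l₁ := by
        obtain ⟨m, hm, rfl | ⟨ω, k, rfl, hs⟩⟩ := h₁
        · exact C'_spawns _ fun y hy => .inl (hm y hy)
        -- Unlike `C`, this controller spawns every admissible sequence, whatever its head.
        · refine C'_spawns _ fun y hy => ?_
          rcases List.mem_cons.1 hy with rfl | hy
          exacts [.inr ⟨ω, k, rfl⟩, .inl (hm y hy)]
      exact .inr ⟨_, _, cfg_exchange h₂ sp R, (Step.c'E.gtrans.parL _).parL _,
        .inl (.refl _), .inl (.refl _)⟩

theorem ans_gen_seq {c : Cst n α} {l₁ l₂} (hc : IsGen c) (h₁ : AF u v l₁) (h₂ : AF u v l₂)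
    (R : Proc n α) {ℓ P'} (t : LStep u v (seqComp l₁) ℓ P') :
    Ans u v (cfg c l₁ R) (cfg c l₂ R) ℓ (.par (.par (K c) P') R) := by
  obtain ⟨l', hl', s, h⟩ := h₁.lstep t
  have s' : SC (.par (.par (K c) P') R) (cfg c l' R) :=
    .parCong (.parCong (.refl _) s) (.refl _)
  rcases h with rfl | ⟨l₃, l₄, h₃, h₄, t', sp⟩
  · exact .inl ⟨rfl, BB.sc_left s' ((Exch.gen hc hl' h₂).bb R)⟩
  · exact .inr ⟨_, _, cfg_exchange h₂ (sp c hc) R, cfg_seq_trans t' R,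
      (Exch.gen hc h₁ h₃).bb R, BB.sc_left s' ((Exch.gen hc hl' h₄).bb R)⟩

theorem ans_idx_seq {ω : List α} {k₁ k₂} {m : List (Cst n α)} (hm : ∀ x ∈ m, IsUV x)
    (hs : Suff u v ω) (R : Proc n α) {ℓ P'}
    (t : LStep u v (seqComp (.W ω k₁ :: m)) ℓ P') :
    Ans u v (cfg .I (.W ω k₁ :: m) R) (cfg .I (.W ω k₂ :: m) R) ℓ
      (.par (.par (K .I) P') R) := by
  obtain ⟨P'', t₀, rfl⟩ := lstep_cons t
  rcases step_W t₀ with ⟨a, ω', rfl, hl, rfl⟩ | ⟨i, rfl, hl, rfl⟩ | ⟨rfl, rfl, rfl, rfl⟩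
  · refine .inr ⟨_, cfg .I (.W ω' k₂ :: m) R, .refl _, cfg_seq_trans (cons_trans ?_ m) R,
      (Exch.idx _ _ hm hs).bb R, (Exch.idx _ _ hm hs.tail).bb R⟩
    rcases hl with rfl | rfl
    exacts [.wA a ω' k₂, .wTa a ω' k₂]
  · rcases hl with rfl | rfl
    · exact .inr ⟨_, _, .refl _, ((Step.iI i).gtrans.parL _).parL _,
        (Exch.idx _ _ hm hs).bb R, (Exch.idx none _ hm hs).bb R⟩
    · exact .inl ⟨rfl, (Exch.idx none _ hm hs).bb R⟩
  · refine .inr ⟨cfg .I (.W [] none :: m) R, cfg .I m R,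
      cfg_reach (cons_reach (reach_W_none _ _) m) R,
      cfg_seq_trans (cons_nil_trans .wE m) R, .inl (.refl _), .inl ?_⟩
    exact .parCong (.parCong (.refl _) (.seqNilL _)) (.refl _)

theorem ans_wrd_seq {ω₁ ω₂ : List α} {k} {m : List (Cst n α)} (hm : ∀ x ∈ m, IsUV x)
    (hs₁ : Suff u v ω₁) (hs₂ : Suff u v ω₂) (R : Proc n α) {ℓ P'}
    (t : LStep u v (seqComp (.W ω₁ k :: m)) ℓ P') :
    Ans u v (cfg .S (.W ω₁ k :: m) R) (cfg .S (.W ω₂ k :: m) R) ℓ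
      (.par (.par (K .S) P') R) := by
  obtain ⟨P'', t₀, rfl⟩ := lstep_cons t
  rcases step_W t₀ with ⟨a, ω', rfl, hl, rfl⟩ | ⟨i, rfl, hl, rfl⟩ | ⟨rfl, rfl, rfl, rfl⟩
  · rcases hl with rfl | rfl
    · exact .inr ⟨_, _, .refl _, ((Step.sS a).gtrans.parL _).parL _,
        (Exch.wrd _ hm hs₁ hs₂).bb R, (Exch.wrd k hm hs₁.tail hs₂).bb R⟩
    · exact .inl ⟨rfl, (Exch.wrd k hm hs₁.tail hs₂).bb R⟩
  · refine .inr ⟨_, cfg .S (.W ω₂ none :: m) R, .refl _, cfg_seq_trans (cons_trans ?_ m) R,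
      (Exch.wrd _ hm hs₁ hs₂).bb R, (Exch.wrd none hm hs₁ hs₂).bb R⟩
    rcases hl with rfl | rfl
    exacts [.wI ω₂ i, .wTi ω₂ i]
  · refine .inr ⟨cfg .S (.W [] none :: m) R, cfg .S m R,
      cfg_reach (cons_reach (reach_W_suffix _ List.nil_suffix) m) R,
      cfg_seq_trans (cons_nil_trans .wE m) R, .inl (.refl _), .inl ?_⟩
    exact .parCong (.parCong (.refl _) (.seqNilL _)) (.refl _)

/-- The bisimulation game for configurations whose sequences are exchangeable. -/
theorem Exch.ans {c : Cst n α} {l₁ l₂} (h : Exch u v c l₁ l₂) (R : Proc n α) {ℓ P'}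
    (t : LStep u v (cfg c l₁ R) ℓ P') : Ans u v (cfg c l₁ R) (cfg c l₂ R) ℓ P' := by
  have hb := h.bb R
  cases t with
  | parR _ t => exact .inr ⟨_, _, .refl _, t.gtrans.parR _, hb, h.bb _⟩
  | parL _ t =>
    have hC' : IsGen (.C' : Cst n α) := .inr (.inr rfl)
    cases h with
    | same => exact .inr ⟨_, _, .refl _, (t.gtrans.parL _), hb, .inl (.refl _)⟩
    | gen hc h₁ h₂ =>
      cases t with
      | parL _ t => cases t with | cst t => exact ans_gen_ctrl hc h₁ h₂ R t
      | parR _ t => exact ans_gen_seq hc h₁ h₂ R t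
    | idx k₁ k₂ hm hs =>
      cases t with
      | parR _ t => exact ans_idx_seq hm hs R t
      | parL _ t =>
        cases t with
        | cst t =>
          have hi := Exch.idx k₁ k₂ hm hs
          cases t with
          | iC => exact ans_ctrl R .iC (.refl _) hi (.gen hC' (.cons hm hs) (.cons hm hs))
          | iI i => exact ans_ctrl R (.iI i) (.refl _) hi hi
    | wrd k hm hs₁ hs₂ =>
      cases t with
      | parR _ t => exact ans_wrd_seq hm hs₁ hs₂ R t
      | parL _ t =>
        cases t with
        | cst t =>
          have hi := Exch.wrd k hm hs₁ hs₂
          cases t with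
          | sC => exact ans_ctrl R .sC (.refl _) hi (.gen hC' (.cons hm hs₁) (.cons hm hs₂))
          | sS a => exact ans_ctrl R (.sS a) (.refl _) hi hi

theorem BB.isBranchingBisim : IsBranchingBisim (GTrans u v) .tau (BB u v) := by
  refine isBranchingBisim_of_reach (fun _ _ h => h.symm) (fun _ _ _ h s => h.sc_right s) ?_
  intro P Q h ℓ P' t
  rcases h with s | ⟨c, l₁, l₂, R, h, s₁, s₂⟩
  · exact .inr ⟨Q, P', .refl _, t.sc_left s.symm, .inl s, .inl (.refl _)⟩
  · obtain ⟨P₀, t₀, s₀⟩ := (t.sc_left s₁.symm).lstep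
    rcases h.ans R t₀ with ⟨e, b⟩ | ⟨Q'', Q', r, t', b, b'⟩
    · exact .inl ⟨e, (BB.sc_left s₀.symm b).sc_right s₂.symm⟩
    · exact .inr ⟨Q'', Q', s₂.reach.trans r, t', BB.sc_left s₁ b, BB.sc_left s₀.symm b'⟩

end Structural

/-- Corollary 5(1) of the paper: `D ≃ D‖G_uℙ_u ≃ D‖G_v'ℙ_vℙ_u ≃ D‖Zℙ_vℙ_u ≃
D‖ℙ_vℙ_u ≃ D‖Wℙ_vℙ_u` for all `ℙ_u`, `ℙ_v` and every `W`-constant `W`. -/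
theorem D_generator_equalities {n : ℕ} {α : Type} [Fintype α]
    (u v : Fin n → List α) (hu : ∀ i, u i ≠ []) (hv : ∀ i, v i ≠ [])
    (lu lv : List (Fin n)) (ω : List α) (k : Option (Fin n))
    (hW : ∃ i, ω <:+ u i ∨ ω <:+ v i) :
    let Pu : Proc n α := seqComp (lu.map fun i => Cst.U i)
    let Pvu : Proc n α :=
      seqComp ((lv.map fun i => Cst.V i) ++ (lu.map fun i => Cst.U i))
    BrBisim (GTrans u v) Lab.tau (K .D) (.par (K .D) (.seq (K .Gu) Pu)) ∧
    BrBisim (GTrans u v) Lab.tau (K .D) (.par (K .D) (.seq (K .Gv') Pvu)) ∧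
    BrBisim (GTrans u v) Lab.tau (K .D) (.par (K .D) (.seq (K .Z) Pvu)) ∧
    BrBisim (GTrans u v) Lab.tau (K .D) (.par (K .D) Pvu) ∧
    BrBisim (GTrans u v) Lab.tau (K .D) (.par (K .D) (.seq (K (.W ω k)) Pvu)) := by
  intro Pu Pvu
  have rZ : Reach u v (.par (K .D) (.seq (K .Z) Pvu)) (.par (K .D) Pvu) := (Z_reach _).parR _
  have rV : Reach u v (.par (K .D) (.seq (K .Gv') Pvu)) (.par (K .D) (.seq (K .Z) Pvu)) :=
    (Step.gv'Z.reach.seqL _).parR _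
  have rU : Reach u v (.par (K .D) (.seq (K .Gu) Pu)) (.par (K .D) (.seq (K .Gv') Pvu)) :=
    (Gu_reach_Gv' lv lu).parR _
  have rD : Reach u v (K .D) (.par (K .D) (.seq (K .Gu) Pu)) := D_reach_Gu lu
  have rE : Reach u v (.par (K .D) Pvu) (K .D) :=
    ((lVU_reach_nil lv lu).parR _).trans (par_nil_sc _).reach
  refine ⟨brBisim_of_reach rD (rU.trans (rV.trans (rZ.trans rE))),
    brBisim_of_reach (rD.trans rU) (rV.trans (rZ.trans rE)),
    brBisim_of_reach (rD.trans (rU.trans rV)) (rZ.trans rE),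
    brBisim_of_reach (rD.trans (rU.trans (rV.trans rZ))) rE, ?_⟩
  have hm : ∀ x ∈ lVU (α := α) lv lu, IsUV x := by
    intro x hx
    rcases List.mem_append.1 hx with hx | hx
    · obtain ⟨i, -, rfl⟩ := List.mem_map.1 hx
      exact .inr ⟨i, rfl⟩
    · obtain ⟨i, -, rfl⟩ := List.mem_map.1 hx
      exact .inl ⟨i, rfl⟩
  exact ⟨BB u v, BB.isBranchingBisim, .inr ⟨.D, [], .W ω k :: lVU lv lu, .nil,
    .gen (.inl rfl) .nil (.cons hm hW),
    ((par_nil_sc _).trans (par_nil_sc _)).symm, (par_nil_sc _).symm⟩⟩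
end
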